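/- Let n ≥ 3, let K be a Hilbert space, let K₀ : K → L²(ℝⁿ) be a bounded everywhere defined operator with ran K₀ ⊂ H^{3/2}(ℝⁿ), and let α ∈ L^∞(ℝⁿ) ∩ L²(ℝⁿ). Then α K₀ belongs to the Schatten–von Neumann class S_r for every r > 2n/3. -/

import Mathlib

open MeasureTheory Filter Topology

noncomputable section

namespace RobinHS

/-- The boundary `ℝⁿ`, modelled as Euclidean space. -/
abbrev Bdy (n : ℕ) := EuclideanSpace ℝ (Fin n)

/-- The ambient space `ℝⁿ × ℝ ≅ ℝ^{n+1}`. -/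
abbrev Amb (n : ℕ) := Bdy n × ℝ

/-- The open upper half-space `ℝ^{n+1}_+`. -/
def half (n : ℕ) : Set (Amb n) := {x | 0 < x.2}

/-- Lebesgue measure restricted to the half-space. -/
abbrev μplus (n : ℕ) : Measure (Amb n) := volume.restrict (half n)

/-- `L²(ℝ^{n+1}_+)`. -/
abbrev Hplus (n : ℕ) := Lp ℂ 2 (μplus n)

/-- `L²(ℝⁿ)`. -/
abbrev Hbd (n : ℕ) := Lp ℂ 2 (volume : Measure (Bdy n))

/-- The coordinate directions of `ℝ^{n+1}`. -/
def dirs (n : ℕ) (i : Fin (n + 1)) : Amb n :=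
  if h : (i : ℕ) < n then (EuclideanSpace.single ⟨i, h⟩ (1 : ℝ), 0) else (0, 1)

/-- Real-valued test functions compactly supported in `U`. -/
def IsTest (n : ℕ) (U : Set (Amb n)) (φ : Amb n → ℝ) : Prop :=
  ContDiff ℝ (⊤ : ℕ∞) φ ∧ HasCompactSupport φ ∧ tsupport φ ⊆ U

/-- Complex-valued test functions compactly supported in `U`. -/
def IsTestC (n : ℕ) (U : Set (Amb n)) (φ : Amb n → ℂ) : Prop :=
  ContDiff ℝ (⊤ : ℕ∞) φ ∧ HasCompactSupport φ ∧ tsupport φ ⊆ U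

/-- `g` is the weak (distributional) derivative of `f` in direction `v` on `U`. -/
def IsWeakDeriv (n : ℕ) (U : Set (Amb n)) (v : Amb n) (f g : Amb n → ℂ) : Prop :=
  ∀ φ : Amb n → ℝ, IsTest n U φ →
    ∫ x in U, f x * ((fderiv ℝ φ x) v : ℂ) = - ∫ x in U, g x * (φ x : ℂ)

def MemL2 (n : ℕ) (U : Set (Amb n)) (f : Amb n → ℂ) : Prop :=
  MemLp f 2 (volume.restrict U)

/-- The Sobolev space `H¹(U)`. -/
def MemH1 (n : ℕ) (U : Set (Amb n)) (f : Amb n → ℂ) : Prop :=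
  MemL2 n U f ∧ ∀ i : Fin (n + 1), ∃ g, IsWeakDeriv n U (dirs n i) f g ∧ MemL2 n U g

/-- The Sobolev space `H²(U)`. -/
def MemH2 (n : ℕ) (U : Set (Amb n)) (f : Amb n → ℂ) : Prop :=
  MemL2 n U f ∧ ∀ i : Fin (n + 1), ∃ g, IsWeakDeriv n U (dirs n i) f g ∧ MemL2 n U g ∧
    ∀ j : Fin (n + 1), ∃ h, IsWeakDeriv n U (dirs n j) g h ∧ MemL2 n U h

/-- Finiteness of the Gagliardo seminorm of order `1/2` on `U ⊆ ℝ^{n+1}`. -/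
def Gag12 (n : ℕ) (U : Set (Amb n)) (g : Amb n → ℂ) : Prop :=
  Integrable (fun p : Amb n × Amb n => ‖g p.1 - g p.2‖ ^ 2 / ‖p.1 - p.2‖ ^ ((n : ℝ) + 2))
    ((volume.restrict U).prod (volume.restrict U))

/-- The fractional Sobolev space `H^{3/2}(U)` (Sobolev–Slobodeckij description). -/
def MemH32 (n : ℕ) (U : Set (Amb n)) (f : Amb n → ℂ) : Prop :=
  MemL2 n U f ∧ ∀ i : Fin (n + 1), ∃ g, IsWeakDeriv n U (dirs n i) f g ∧ MemL2 n U g ∧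
    Gag12 n U g

/-- The classical Laplacian of a test function. -/
def lapl (n : ℕ) (φ : Amb n → ℝ) (x : Amb n) : ℝ :=
  ∑ i : Fin (n + 1), fderiv ℝ (fun y => fderiv ℝ φ y (dirs n i)) x (dirs n i)

/-- `g = -Δ f` in the weak (distributional) sense on `U`. -/
def IsNegLap (n : ℕ) (U : Set (Amb n)) (f g : Amb n → ℂ) : Prop :=
  ∀ φ : Amb n → ℝ, IsTest n U φ →
    ∫ x in U, f x * (lapl n φ x : ℂ) = - ∫ x in U, g x * (φ x : ℂ)

/-- `b` is the Dirichlet boundary trace `f|_{ℝⁿ}` of `f` (as an `L²(ℝⁿ)` limit). -/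
def HasDTrace (n : ℕ) (f : Amb n → ℂ) (b : Bdy n → ℂ) : Prop :=
  Tendsto (fun t : ℝ => ∫ y : Bdy n, ‖f (y, t) - b y‖ ^ 2) (𝓝[>] (0 : ℝ)) (𝓝 (0 : ℝ))

/-- `b = ∂_ν f|_{ℝⁿ}` is the trace of the normal derivative of `f`, the normal pointing
outwards of the half-space (i.e. downwards). -/
def HasNTrace (n : ℕ) (f : Amb n → ℂ) (b : Bdy n → ℂ) : Prop :=
  ∃ f', IsWeakDeriv n (half n) ((0 : Bdy n), (1 : ℝ)) f f' ∧ HasDTrace n f' (fun y => - b y)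

/-- The Sobolev space `H²₀(ℝ^{n+1}_+)`: `H²`-functions approximable in the `H²`-norm by
smooth functions compactly supported in the open half-space. -/
def MemH20 (n : ℕ) (f : Amb n → ℂ) : Prop :=
  MemH2 n (half n) f ∧
  ∀ ε : ℝ, 0 < ε → ∃ φ : Amb n → ℂ, IsTestC n (half n) φ ∧
    (∫ x in half n, ‖f x - φ x‖ ^ 2) < ε ∧
    (∀ i : Fin (n + 1), ∀ g, IsWeakDeriv n (half n) (dirs n i) f g →
      (∫ x in half n, ‖g x - (fderiv ℝ φ x) (dirs n i)‖ ^ 2) < ε) ∧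
    (∀ i j : Fin (n + 1), ∀ g h, IsWeakDeriv n (half n) (dirs n i) f g →
      IsWeakDeriv n (half n) (dirs n j) g h →
      (∫ x in half n, ‖h x - (fderiv ℝ (fun y => (fderiv ℝ φ y) (dirs n i)) x) (dirs n j)‖ ^ 2) < ε)

/-- Membership in the domain of the Robin Laplacian `A_α`:
`f ∈ H²(ℝ^{n+1}_+)` with `∂_ν f|_{ℝⁿ} = α f|_{ℝⁿ}`. -/
def RobinDom (n : ℕ) (α : Bdy n → ℂ) (f : Amb n → ℂ) : Prop :=
  MemH2 n (half n) f ∧ ∃ b : Bdy n → ℂ, HasDTrace n f b ∧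
    HasNTrace n f (fun y => α y * b y)

/-- The graph relation of the Robin Laplacian `A_α` in `L²(ℝ^{n+1}_+)`: `w = A_α u`. -/
def RobinRel (n : ℕ) (α : Bdy n → ℂ) (u w : Hplus n) : Prop :=
  ∃ f g : Amb n → ℂ, ⇑u =ᵐ[μplus n] f ∧ ⇑w =ᵐ[μplus n] g ∧
    RobinDom n α f ∧ IsNegLap n (half n) f g

/-- The graph relation of the Neumann Laplacian `A_N` in `L²(ℝ^{n+1}_+)`. -/
def NeuRel (n : ℕ) (u w : Hplus n) : Prop :=
  ∃ f g : Amb n → ℂ, ⇑u =ᵐ[μplus n] f ∧ ⇑w =ᵐ[μplus n] g ∧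
    MemH2 n (half n) f ∧ HasNTrace n f (fun _ => 0) ∧ IsNegLap n (half n) f g

/-- Membership in `H^{3/2}_Δ(ℝ^{n+1}_+) = {f ∈ H^{3/2} : Δf ∈ L²}`. -/
def TDom (n : ℕ) (f : Amb n → ℂ) : Prop :=
  MemH32 n (half n) f ∧ ∃ L, IsNegLap n (half n) f L ∧ MemL2 n (half n) L

/-- The graph relation of the operator `T = -Δ` on `H^{3/2}_Δ(ℝ^{n+1}_+)`. -/
def TRel (n : ℕ) (u w : Hplus n) : Prop :=
  ∃ f g : Amb n → ℂ, ⇑u =ᵐ[μplus n] f ∧ ⇑w =ᵐ[μplus n] g ∧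
    TDom n f ∧ IsNegLap n (half n) f g

/-- The graph relation of `T` restricted to `ker Γ₀` (vanishing Neumann trace). -/
def TNeuRel (n : ℕ) (u w : Hplus n) : Prop :=
  ∃ f g : Amb n → ℂ, ⇑u =ᵐ[μplus n] f ∧ ⇑w =ᵐ[μplus n] g ∧
    TDom n f ∧ HasNTrace n f (fun _ => 0) ∧ IsNegLap n (half n) f g

/-- The graph relation of the minimal operator `A = -Δ` on `H²₀(ℝ^{n+1}_+)`. -/
def MinRel (n : ℕ) (u w : Hplus n) : Prop :=
  ∃ f g : Amb n → ℂ, ⇑u =ᵐ[μplus n] f ∧ ⇑w =ᵐ[μplus n] g ∧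
    MemH20 n f ∧ IsNegLap n (half n) f g

/-- `f ∈ ker (T - λ)`. -/
def EigSol (n : ℕ) (lam : ℂ) (f : Amb n → ℂ) : Prop :=
  TDom n f ∧ IsNegLap n (half n) f (fun x => lam * f x)

/-- `α ∈ W^{1,∞}(ℝⁿ)`: bounded with bounded (weak) first-order derivatives,
equivalently bounded and Lipschitz. -/
def IsW1inf (n : ℕ) (α : Bdy n → ℂ) : Prop :=
  (∃ C : ℝ, ∀ x, ‖α x‖ ≤ C) ∧ ∃ L : NNReal, LipschitzWith L α

/-- `‖α‖_∞ = sup_x |α(x)|`. -/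
def supNorm (n : ℕ) (α : Bdy n → ℂ) : ℝ := ⨆ x, ‖α x‖

/-- `γ` is the Poisson operator `γ(λ)` (the `γ`-field): it maps the Neumann trace
`∂_ν f_λ|_{ℝⁿ}` of `f_λ ∈ ker(T - λ)` to `f_λ`. -/
def IsPoissonOp (n : ℕ) (lam : ℂ) (γ : Hbd n →L[ℂ] Hplus n) : Prop :=
  ∀ (Φ : Hbd n) (a : Bdy n → ℂ) (f : Amb n → ℂ),
    ⇑Φ =ᵐ[(volume : Measure (Bdy n))] a → EigSol n lam f → HasNTrace n f a →
      ⇑(γ Φ) =ᵐ[μplus n] f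

/-- `M` is the Neumann-to-Dirichlet map `M(λ)` (the Weyl function): it maps the Neumann
trace of `f_λ ∈ ker(T - λ)` to its Dirichlet trace. -/
def IsNDMap (n : ℕ) (lam : ℂ) (M : Hbd n →L[ℂ] Hbd n) : Prop :=
  ∀ (Φ : Hbd n) (a b : Bdy n → ℂ) (f : Amb n → ℂ),
    ⇑Φ =ᵐ[(volume : Measure (Bdy n))] a → EigSol n lam f → HasNTrace n f a →
      HasDTrace n f b → ⇑(M Φ) =ᵐ[(volume : Measure (Bdy n))] b

/-- `M` is the bounded multiplication operator by `α` in `L²(ℝⁿ)`. -/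
def IsMultOp (n : ℕ) (α : Bdy n → ℂ) (M : Hbd n →L[ℂ] Hbd n) : Prop :=
  ∀ u : Hbd n, ⇑(M u) =ᵐ[(volume : Measure (Bdy n))] fun y => α y * u y

/-! Sobolev spaces on the boundary `ℝⁿ`. -/

def bdirs (n : ℕ) (i : Fin n) : Bdy n := EuclideanSpace.single i (1 : ℝ)

def IsTestB (n : ℕ) (φ : Bdy n → ℝ) : Prop := ContDiff ℝ (⊤ : ℕ∞) φ ∧ HasCompactSupport φ

def IsWeakDerivB (n : ℕ) (v : Bdy n) (f g : Bdy n → ℂ) : Prop :=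
  ∀ φ : Bdy n → ℝ, IsTestB n φ →
    ∫ y, f y * ((fderiv ℝ φ y) v : ℂ) = - ∫ y, g y * (φ y : ℂ)

/-- Finiteness of the Gagliardo seminorm of order `1/2` on `ℝⁿ`. -/
def GagB (n : ℕ) (g : Bdy n → ℂ) : Prop :=
  Integrable (fun p : Bdy n × Bdy n => ‖g p.1 - g p.2‖ ^ 2 / ‖p.1 - p.2‖ ^ ((n : ℝ) + 1))
    ((volume : Measure (Bdy n)).prod (volume : Measure (Bdy n)))

/-- The fractional Sobolev space `H^{3/2}(ℝⁿ)`. -/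
def MemH32B (n : ℕ) (f : Bdy n → ℂ) : Prop :=
  MemLp f 2 (volume : Measure (Bdy n)) ∧
  ∀ i : Fin n, ∃ g, IsWeakDerivB n (bdirs n i) f g ∧
    MemLp g 2 (volume : Measure (Bdy n)) ∧ GagB n g

/-! Abstract notions for (graph relations of) unbounded operators in Hilbert spaces,
Schatten–von Neumann classes, groups, spectra. -/

section Abstract

variable {H G : Type*} [NormedAddCommGroup H] [InnerProductSpace ℂ H] [CompleteSpace H]
  [NormedAddCommGroup G] [InnerProductSpace ℂ G] [CompleteSpace G]

/-- `R` is the (bounded, everywhere defined, two-sided) resolvent of the operator with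
graph relation `Rel` at the point `lam`. -/
def RelResolventAt (Rel : H → H → Prop) (lam : ℂ) (R : H →L[ℂ] H) : Prop :=
  (∀ u : H, Rel (R u) (u + lam • R u)) ∧
  (∀ u w : H, Rel u w → R (w - lam • u) = u)

/-- `lam` belongs to the resolvent set of the operator with graph relation `Rel`. -/
def RelInResolvent (Rel : H → H → Prop) (lam : ℂ) : Prop :=
  ∃ R : H →L[ℂ] H, RelResolventAt Rel lam R

/-- The graph relation of the adjoint operator. -/
def AdjRel (Rel : H → H → Prop) (u w : H) : Prop :=
  ∀ f g : H, Rel f g → (inner ℂ g u : ℂ) = (inner ℂ f w : ℂ)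

/-- Symmetry of the operator with graph relation `Rel`. -/
def IsSymmRel (Rel : H → H → Prop) : Prop :=
  ∀ u w f g : H, Rel u w → Rel f g → (inner ℂ w f : ℂ) = (inner ℂ u g : ℂ)

/-- Selfadjointness of the operator with graph relation `Rel`. -/
def IsSelfAdjRel (Rel : H → H → Prop) : Prop :=
  ∀ u w : H, Rel u w ↔ AdjRel Rel u w

/-- The operator with graph relation `Rel`, shifted by `lam`, is semi-Fredholm:
closed range, and finite-dimensional kernel or finite-codimensional range. -/
def SemiFredholmAt (Rel : H → H → Prop) (lam : ℂ) : Prop :=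
  IsClosed {v : H | ∃ u w, Rel u w ∧ v = w - lam • u} ∧
  ((∃ t : Finset H, {u : H | Rel u (lam • u)} ⊆ (Submodule.span ℂ (t : Set H) : Set H)) ∨
   (∃ t : Finset H,
      Submodule.span ℂ ((t : Set H) ∪ {v : H | ∃ u w, Rel u w ∧ v = w - lam • u}) = ⊤))

/-- The essential spectrum: points where the operator is not semi-Fredholm. -/
def EssSpec (Rel : H → H → Prop) : Set ℂ := {lam | ¬ SemiFredholmAt Rel lam}

/-- The `k`-th approximation number (`= (k+1)`-th singular value) of a bounded operator
between Hilbert spaces: the distance to operators of rank at most `k`. -/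
def sNum (T : H →L[ℂ] G) (k : ℕ) : ℝ :=
  ⨅ F : {F : H →L[ℂ] G // LinearMap.rank F.toLinearMap ≤ (k : Cardinal)}, ‖T - (F : H →L[ℂ] G)‖

/-- Membership in the Schatten–von Neumann ideal `S_p`: the singular values are
`p`-summable. -/
def MemSchatten (p : ℝ) (T : H →L[ℂ] G) : Prop :=
  IsCompactOperator ⇑T ∧ Summable (fun k : ℕ => sNum T k ^ p)

/-- Membership in the weak Schatten–von Neumann ideal `S_{p,∞}`:
`s_k(T) = O(k^{-1/p})`. -/
def MemWeakSchatten (p : ℝ) (T : H →L[ℂ] G) : Prop :=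
  IsCompactOperator ⇑T ∧ ∃ C : ℝ, ∀ k : ℕ, sNum T k ≤ C * ((k : ℝ) + 1) ^ (-(1 / p))

/-- `U` is the strongly continuous unitary group `t ↦ e^{-itA}` generated by the
selfadjoint operator `A` with graph relation `Rel`. -/
def IsUnitaryGroupFor (Rel : H → H → Prop) (U : ℝ → (H →L[ℂ] H)) : Prop :=
  U 0 = 1 ∧ (∀ s t : ℝ, U (s + t) = (U s).comp (U t)) ∧
  (∀ (t : ℝ) (f : H), ‖U t f‖ = ‖f‖) ∧
  (∀ f : H, Continuous fun t : ℝ => U t f) ∧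
  (∀ u w : H, Rel u w → ∀ t : ℝ, HasDerivAt (fun s : ℝ => U s u) ((-Complex.I) • (U t w)) t)

/-- `f` belongs to the absolutely continuous subspace of the selfadjoint operator
generating the unitary group `U`: its spectral measure `μ_f`, whose Fourier–Stieltjes
transform is `t ↦ ⟪f, U(t) f⟫`, has an integrable density w.r.t. Lebesgue measure. -/
def InAc (U : ℝ → (H →L[ℂ] H)) (f : H) : Prop :=
  ∃ h : ℝ → ℝ, Integrable h ∧ (∀ x, 0 ≤ h x) ∧
    ∀ t : ℝ, (inner ℂ f (U t f) : ℂ) = ∫ x : ℝ, Complex.exp ((-Complex.I) * t * x) * (h x : ℂ)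

/-- `lam` is in the resolvent set of the absolutely continuous part (the restriction to
the absolutely continuous subspace) of the operator with graph relation `Rel`. -/
def AcResolventAt (Rel : H → H → Prop) (U : ℝ → (H →L[ℂ] H)) (lam : ℂ) : Prop :=
  ∃ R : H →L[ℂ] H,
    (∀ f : H, InAc U f → InAc U (R f) ∧ Rel (R f) (f + lam • R f)) ∧
    (∀ u w : H, Rel u w → InAc U u → R (w - lam • u) = u)

/-- `W` is a complete wave operator for the pair of unitary groups `U₁`, `U₂` along the
filter `l` (`atTop` for `W₊`, `atBot` for `W₋`): the strong limits
`lim U₂(t)* U₁(t) f` exist on the absolutely continuous subspace of the first operator,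
`W` is isometric there, and its range is the absolutely continuous subspace of the
second operator. -/
def WaveProps (U₁ U₂ : ℝ → (H →L[ℂ] H)) (l : Filter ℝ) (W : H →L[ℂ] H) : Prop :=
  (∀ f : H, InAc U₁ f → Tendsto (fun t : ℝ => U₂ (-t) (U₁ t f)) l (𝓝 (W f))) ∧
  (∀ f : H, InAc U₁ f → ‖W f‖ = ‖f‖ ∧ InAc U₂ (W f)) ∧
  (∀ g : H, InAc U₂ g → ∃ f : H, InAc U₁ f ∧ W f = g)

/-- `V` implements a unitary equivalence between the absolutely continuous parts of the
operators generating `U₁` and `U₂`. -/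
def AcUnitEquiv (U₁ U₂ : ℝ → (H →L[ℂ] H)) (V : H →L[ℂ] H) : Prop :=
  (∀ f : H, InAc U₁ f → ‖V f‖ = ‖f‖ ∧ InAc U₂ (V f)) ∧
  (∀ g : H, InAc U₂ g → ∃ f : H, InAc U₁ f ∧ V f = g) ∧
  (∀ (t : ℝ) (f : H), InAc U₁ f → V (U₁ t f) = U₂ t (V f))

/-- The spectrum of the operator with graph relation `Rel`. -/
def SpecOf (Rel : H → H → Prop) : Set ℂ := {lam | ¬ RelInResolvent Rel lam}

/-- `u` is a generalized eigenvector (root vector) at `lam`: `(A - lam)^k u = 0`. -/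
def RootVec (Rel : H → H → Prop) (lam : ℂ) (u : H) : Prop :=
  ∃ (k : ℕ) (c : ℕ → H), c 0 = u ∧ c k = 0 ∧
    ∀ j, j < k → ∃ w, Rel (c j) w ∧ c (j + 1) = w - lam • c j

/-- The algebraic multiplicity of `lam`: the dimension of the space of root vectors,
expressed as the least cardinality of a finite spanning set. -/
def AlgMult (Rel : H → H → Prop) (lam : ℂ) : ℕ :=
  sInf {k : ℕ | ∃ t : Finset H, t.card = k ∧
    {u : H | RootVec Rel lam u} ⊆ (Submodule.span ℂ (t : Set H) : Set H)}

/-- The discrete spectrum: isolated eigenvalues of finite algebraic multiplicity. -/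
def DiscSpec (Rel : H → H → Prop) : Set ℂ :=
  {lam | lam ∈ SpecOf Rel ∧
    (∃ ε : ℝ, 0 < ε ∧ ∀ z ∈ SpecOf Rel, dist z lam < ε → z = lam) ∧
    (∃ u : H, u ≠ 0 ∧ Rel u (lam • u)) ∧
    ∃ t : Finset H, {u : H | RootVec Rel lam u} ⊆ (Submodule.span ℂ (t : Set H) : Set H)}

end Abstract

end RobinHS

/-!
An operator whose range lies in `H^s` factors, by the closed graph theorem, through
`𝓕⁻¹ (1 + |ξ|²)^(-s/2)`, so it suffices to estimate the singular numbers of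
`α 𝓕⁻¹ (1 + |ξ|²)^(-s/2)`. Cutting the weight at frequency `R` leaves a high-frequency part of
operator norm at most `‖α‖_∞ R^(-s)` and a low-frequency part that is Hilbert–Schmidt because both
factors are square integrable; choosing `R` according to the index of the singular number gives a
weak Schatten bound of every order larger than `max (n / s) 2`.

Membership in `H^(3/2)`, given through weak derivatives with finite Gagliardo seminorm, becomes a
Fourier weight by Plancherel: the squared seminorm of `g` is the integral of `|𝓕 g|²`
against `∫ |e^(2πi⟨h, ξ⟩) - 1|² |h|^(-n-1) dh`, which dominates a multiple of `|ξ|`.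
-/

namespace RobinHS

section ApproximationNumbers

variable {H G L : Type*} [NormedAddCommGroup H] [InnerProductSpace ℂ H]
  [NormedAddCommGroup G] [InnerProductSpace ℂ G]
  [NormedAddCommGroup L] [InnerProductSpace ℂ L]

lemma sNum_nonneg (T : H →L[ℂ] G) (k : ℕ) : 0 ≤ sNum T k :=
  Real.iInf_nonneg fun _ => norm_nonneg _

lemma sNum_le_norm_sub (T : H →L[ℂ] G) {F : H →L[ℂ] G} {k : ℕ}
    (hF : LinearMap.rank F.toLinearMap ≤ (k : Cardinal)) : sNum T k ≤ ‖T - F‖ :=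
  ciInf_le (f := fun F : {F : H →L[ℂ] G // LinearMap.rank F.toLinearMap ≤ (k : Cardinal)} =>
    ‖T - (F : H →L[ℂ] G)‖) ⟨0, by rintro _ ⟨F, rfl⟩; exact norm_nonneg _⟩ ⟨F, hF⟩

lemma exists_rank_le_norm_sub_lt (T : H →L[ℂ] G) {k : ℕ} {c : ℝ} (hc : sNum T k < c) :
    ∃ F : H →L[ℂ] G, LinearMap.rank F.toLinearMap ≤ (k : Cardinal) ∧ ‖T - F‖ < c := by
  have : Nonempty {F : H →L[ℂ] G // LinearMap.rank F.toLinearMap ≤ (k : Cardinal)} :=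
    ⟨0, by simp [LinearMap.rank_zero]⟩
  obtain ⟨⟨F, hF⟩, hlt⟩ := exists_lt_of_ciInf_lt hc
  exact ⟨F, hF, hlt⟩

lemma sNum_add_le (S R : H →L[ℂ] G) (k : ℕ) : sNum (S + R) k ≤ sNum S k + ‖R‖ := by
  refine le_of_forall_pos_lt_add fun ε hε => ?_
  obtain ⟨F, hF, hlt⟩ := exists_rank_le_norm_sub_lt S (lt_add_of_pos_right (sNum S k) hε)
  calc sNum (S + R) k ≤ ‖S + R - F‖ := sNum_le_norm_sub _ hF
    _ = ‖(S - F) + R‖ := by congr 1; abel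
    _ ≤ ‖S - F‖ + ‖R‖ := norm_add_le _ _
    _ < sNum S k + ‖R‖ + ε := by linarith

lemma sNum_comp_le (S : H →L[ℂ] G) (B : L →L[ℂ] H) (k : ℕ) :
    sNum (S ∘L B) k ≤ sNum S k * ‖B‖ := by
  refine le_of_forall_gt_imp_ge_of_dense fun c hc => ?_
  rcases (norm_nonneg B).eq_or_lt with hB | hB
  · rw [← hB, mul_zero] at hc
    rw [norm_eq_zero.1 hB.symm, ContinuousLinearMap.comp_zero]
    refine (sNum_le_norm_sub 0 (F := 0) ?_).trans ?_
    · simp [LinearMap.rank_zero]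
    · simpa using hc.le
  · obtain ⟨F, hF, hlt⟩ := exists_rank_le_norm_sub_lt S ((lt_div_iff₀ hB).2 hc)
    calc sNum (S ∘L B) k ≤ ‖S ∘L B - F ∘L B‖ :=
          sNum_le_norm_sub _ ((LinearMap.rank_comp_le_left _ _).trans hF)
      _ = ‖(S - F) ∘L B‖ := by rw [ContinuousLinearMap.sub_comp]
      _ ≤ ‖S - F‖ * ‖B‖ := ContinuousLinearMap.opNorm_comp_le _ _
      _ ≤ c := ((lt_div_iff₀ hB).1 (by exact hlt)).le

lemma exists_mem_orthogonal_le_norm (T : H →L[ℂ] G) {k : ℕ} {c : ℝ} (hc₀ : 0 ≤ c)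
    (hc : c < sNum T k) (V : Submodule ℂ H) [FiniteDimensional ℂ V]
    (hV : Module.finrank ℂ V ≤ k) : ∃ z ∈ Vᗮ, ‖z‖ = 1 ∧ c ≤ ‖T z‖ := by
  have hrank : LinearMap.rank (T ∘L V.starProjection).toLinearMap ≤ (k : Cardinal) := by
    have hrange : LinearMap.range (T ∘L V.starProjection).toLinearMap = V.map T.toLinearMap :=
      (LinearMap.range_comp _ _).trans (by rw [V.range_starProjection])
    rw [LinearMap.rank, hrange, ← Module.finrank_eq_rank]
    exact_mod_cast (Submodule.finrank_map_le T.toLinearMap V).trans hV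
  have hlt : c < ‖T - T ∘L V.starProjection‖ := hc.trans_le (sNum_le_norm_sub T hrank)
  obtain ⟨x, hx⟩ : ∃ x, c * ‖x‖ < ‖(T - T ∘L V.starProjection) x‖ := by
    by_contra! h
    exact hlt.not_ge (ContinuousLinearMap.opNorm_le_bound _ hc₀ h)
  set z := x - V.starProjection x with hz
  replace hx : c * ‖x‖ < ‖T z‖ := by simpa [hz] using hx
  have hzV : z ∈ Vᗮ := V.sub_starProjection_mem_orthogonal x
  have hzx : ‖z‖ ≤ ‖x‖ := by
    simpa [Submodule.starProjection_orthogonal_val] using Vᗮ.norm_starProjection_apply_le x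
  have hz₀ : 0 < ‖z‖ := by
    rw [norm_pos_iff]
    intro h
    rw [h, map_zero, norm_zero] at hx
    exact hx.not_ge (by positivity)
  refine ⟨((‖z‖⁻¹ : ℝ) : ℂ) • z, Vᗮ.smul_mem _ hzV, ?_, ?_⟩
  · simp [norm_smul, hz₀.ne']
  · rw [map_smul, norm_smul, Complex.norm_real, norm_inv, norm_norm, inv_mul_eq_div,
      le_div_iff₀ hz₀]
    exact (mul_le_mul_of_nonneg_left hzx hc₀).trans hx.le

lemma exists_orthonormal_le_norm (T : H →L[ℂ] G) {k : ℕ} {c : ℝ} (hc₀ : 0 ≤ c)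
    (hc : c < sNum T k) {m : ℕ} (hm : m ≤ k + 1) :
    ∃ e : Fin m → H, Orthonormal ℂ e ∧ ∀ j, c ≤ ‖T (e j)‖ := by
  induction m with
  | zero => exact ⟨fun j => j.elim0, ⟨fun j => j.elim0, fun j => j.elim0⟩, fun j => j.elim0⟩
  | succ m ih =>
    obtain ⟨e, he, hTe⟩ := ih (by lia)
    have : FiniteDimensional ℂ (Submodule.span ℂ (Set.range e)) :=
      .span_of_finite ℂ (Set.finite_range e)
    obtain ⟨z, hzV, hz, hTz⟩ := exists_mem_orthogonal_le_norm T hc₀ hc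
      (Submodule.span ℂ (Set.range e)) ((finrank_range_le_card e).trans (by simpa using by lia))
    refine ⟨Matrix.vecCons z e, orthonormal_vecCons_iff.2 ⟨hz, fun i => ?_, he⟩,
      Fin.cases hTz hTe⟩
    exact Submodule.inner_left_of_mem_orthogonal (Submodule.subset_span (Set.mem_range_self i)) hzV

lemma sNum_le_of_forall_orthonormal (T : H →L[ℂ] G) {k : ℕ} {D : ℝ}
    (hD : ∀ e : Fin (k + 1) → H, Orthonormal ℂ e → ∑ j, ‖T (e j)‖ ^ 2 ≤ D) :
    sNum T k ≤ √(D / ((k : ℝ) + 1)) := by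
  by_contra! h
  obtain ⟨c, hc, hck⟩ := exists_between h
  have hc₀ : 0 < c := (Real.sqrt_nonneg _).trans_lt hc
  obtain ⟨e, he, hTe⟩ := exists_orthonormal_le_norm T hc₀.le hck le_rfl
  have hDc : D < c ^ 2 * ((k : ℝ) + 1) := by
    rwa [Real.sqrt_lt' hc₀, div_lt_iff₀ (by positivity)] at hc
  refine hDc.not_ge (le_trans ?_ (hD e he))
  calc c ^ 2 * ((k : ℝ) + 1) = ∑ _j : Fin (k + 1), c ^ 2 := by simp [mul_comm]
    _ ≤ ∑ j, ‖T (e j)‖ ^ 2 := by gcongr with j; exact hTe j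

lemma isCompactOperator_of_rank_le_natCast {F : H →L[ℂ] G} {k : ℕ}
    (hF : LinearMap.rank F.toLinearMap ≤ (k : Cardinal)) : IsCompactOperator F := by
  have : FiniteDimensional ℂ F.range :=
    Module.rank_lt_aleph0_iff.1 (hF.trans_lt Cardinal.natCast_lt_aleph0)
  have := FiniteDimensional.proper ℂ F.range
  exact (isCompactOperator_of_locallyCompactSpace_dom F.rangeRestrict).clm_comp F.range.subtypeL

lemma isCompactOperator_of_tendsto_sNum [CompleteSpace G] {T : H →L[ℂ] G}
    (hT : Tendsto (sNum T) atTop (𝓝 0)) :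
    IsCompactOperator T := by
  have hF (k : ℕ) :
      ∃ F : H →L[ℂ] G, IsCompactOperator F ∧ ‖T - F‖ < sNum T k + 1 / (k + 1) :=
    have ⟨F, hF, hlt⟩ := exists_rank_le_norm_sub_lt T
      (lt_add_of_pos_right (sNum T k) (Nat.one_div_pos_of_nat (α := ℝ) (n := k)))
    ⟨F, isCompactOperator_of_rank_le_natCast hF, hlt⟩
  choose F hFc hlt using hF
  refine isCompactOperator_of_tendsto (F := F) (l := atTop) ?_ (.of_forall hFc)
  rw [tendsto_iff_norm_sub_tendsto_zero]
  refine squeeze_zero (fun _ => norm_nonneg _) (fun k => ?_)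
    (by simpa only [add_zero] using hT.add tendsto_one_div_add_atTop_nhds_zero_nat)
  rw [norm_sub_rev]
  exact (hlt k).le

lemma memWeakSchatten_of_sNum_le [CompleteSpace G] {p C : ℝ} (hp : 0 < p) {T : H →L[ℂ] G}
    (hT : ∀ k : ℕ, sNum T k ≤ C * ((k : ℝ) + 1) ^ (-(1 / p))) : MemWeakSchatten p T := by
  refine ⟨isCompactOperator_of_tendsto_sNum ?_, C, hT⟩
  have hdecay : Tendsto (fun k : ℕ => ((k : ℝ) + 1) ^ (-(1 / p))) atTop (𝓝 0) :=
    (tendsto_rpow_neg_atTop (by positivity)).comp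
      (tendsto_atTop_add_const_right _ _ tendsto_natCast_atTop_atTop)
  exact squeeze_zero (sNum_nonneg T) hT (by simpa using hdecay.const_mul C)

lemma MemWeakSchatten.comp {p : ℝ} {S : H →L[ℂ] G} (hS : MemWeakSchatten p S) (B : L →L[ℂ] H) :
    MemWeakSchatten p (S ∘L B) := by
  obtain ⟨hc, C, hC⟩ := hS
  refine ⟨hc.comp_clm B, C * ‖B‖, fun k => (sNum_comp_le S B k).trans ?_⟩
  calc sNum S k * ‖B‖ ≤ C * ((k : ℝ) + 1) ^ (-(1 / p)) * ‖B‖ := by gcongr; exact hC k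
    _ = C * ‖B‖ * ((k : ℝ) + 1) ^ (-(1 / p)) := by ring

lemma MemWeakSchatten.memSchatten {p r : ℝ} (hp : 0 < p) (hpr : p < r) {T : H →L[ℂ] G}
    (hT : MemWeakSchatten p T) : MemSchatten r T := by
  obtain ⟨hc, C, hC⟩ := hT
  have hC₀ : 0 ≤ C := by simpa using (sNum_nonneg T 0).trans (hC 0)
  have hsum : Summable fun k : ℕ => ((k : ℝ) + 1) ^ (-(r / p)) := by
    have h := Real.summable_nat_rpow.2 (neg_lt_neg ((one_lt_div hp).2 hpr))
    simpa using (summable_nat_add_iff 1).2 h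
  refine ⟨hc, (hsum.mul_left (C ^ r)).of_nonneg_of_le
    (fun k => Real.rpow_nonneg (sNum_nonneg T k) r) fun k => ?_⟩
  calc sNum T k ^ r ≤ (C * ((k : ℝ) + 1) ^ (-(1 / p))) ^ r :=
        Real.rpow_le_rpow (sNum_nonneg T k) (hC k) (hp.trans hpr).le
    _ = C ^ r * ((k : ℝ) + 1) ^ (-(r / p)) := by
        rw [Real.mul_rpow hC₀ (by positivity), ← Real.rpow_mul (by positivity)]
        ring_nf

end ApproximationNumbers

section MultiplicationOperators

variable {X F : Type*} [MeasurableSpace X] {μ : Measure X}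

lemma norm_sq_eq_integral_norm_sq [NormedAddCommGroup F] (f : Lp F 2 μ) :
    ‖f‖ ^ 2 = ∫ x, ‖f x‖ ^ 2 ∂μ := by
  have h := (Lp.memLp f).eLpNorm_eq_integral_rpow_norm two_ne_zero ENNReal.ofNat_ne_top
  rw [Lp.norm_def, h, ENNReal.toReal_ofReal (by positivity), ← Real.rpow_natCast,
    ← Real.rpow_mul (by positivity)]
  simp

/-- The operator of multiplication by an essentially bounded function on `L²`. -/
def mulCLM {a : X → ℂ} (ha : MemLp a ⊤ μ) : Lp ℂ 2 μ →L[ℂ] Lp ℂ 2 μ :=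
  (ContinuousLinearMap.lsmul ℂ ℂ).holderL μ ⊤ 2 2 ha.toLp

lemma coeFn_mulCLM {a : X → ℂ} (ha : MemLp a ⊤ μ) (f : Lp ℂ 2 μ) :
    ⇑(mulCLM ha f) =ᵐ[μ] fun x => a x * f x := by
  filter_upwards [(ContinuousLinearMap.lsmul ℂ ℂ).coeFn_holder (r := 2) ha.toLp f,
    ha.coeFn_toLp] with x hx hax
  exact hx.trans (by rw [hax]; rfl)

lemma norm_mulCLM_le {a : X → ℂ} (ha : MemLp a ⊤ μ) {C : ℝ} (hC₀ : 0 ≤ C)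
    (hC : ∀ᵐ x ∂μ, ‖a x‖ ≤ C) : ‖mulCLM ha‖ ≤ C := by
  refine ContinuousLinearMap.opNorm_le_bound _ hC₀ fun f => Lp.norm_le_mul_norm_of_ae_le_mul ?_
  filter_upwards [coeFn_mulCLM ha f, hC] with x hx hCx
  rw [hx, norm_mul]
  gcongr

lemma mulCLM_add {a b : X → ℂ} (ha : MemLp a ⊤ μ) (hb : MemLp b ⊤ μ) :
    mulCLM (ha.add hb) = mulCLM ha + mulCLM hb := by
  rw [mulCLM, MemLp.toLp_add ha hb, map_add]
  rfl

lemma mulCLM_injective {a : X → ℂ} (ha : MemLp a ⊤ μ) (ha₀ : ∀ᵐ x ∂μ, a x ≠ 0) :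
    Function.Injective (mulCLM ha) := by
  intro f g hfg
  refine Lp.ext ?_
  filter_upwards [coeFn_mulCLM ha f, coeFn_mulCLM ha g, ha₀] with x hf hg hx
  exact mul_left_cancel₀ hx (by rw [← hf, hfg, hg])

end MultiplicationOperators

section FourierMultipliers

open scoped FourierTransform SchwartzMap ContDiff

variable {E : Type*} [NormedAddCommGroup E] [InnerProductSpace ℝ E] [FiniteDimensional ℝ E]
  [MeasurableSpace E] [BorelSpace E]

lemma integral_fourierInv_mul_eq {f g : E → ℂ} (hf : Integrable f) (hg : Integrable g) :
    ∫ ξ, 𝓕⁻ f ξ * g ξ = ∫ x, f x * 𝓕⁻ g x := by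
  have hflip : (-innerₗ E).flip = -innerₗ E := congrArg (- ·) (flip_innerₗ E)
  have h := VectorFourier.integral_fourierIntegral_smul_eq_flip (μ := volume) (ν := volume)
    (L := -innerₗ E) Real.continuous_fourierChar (by exact continuous_inner.neg) hf hg
  rwa [hflip] at h

lemma continuous_fourierInv_of_integrable {f : E → ℂ} (hf : Integrable f) : Continuous (𝓕⁻ f) :=
  VectorFourier.fourierIntegral_continuous Real.continuous_fourierChar
    (by exact continuous_inner.neg) hf

lemma integral_mul_coeFn_fourierInv (f : Lp ℂ 2 (volume : Measure E)) (φ : 𝓢(E, ℂ)) :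
    ∫ x, φ x * (𝓕⁻ f : Lp ℂ 2 (volume : Measure E)) x = ∫ ξ, 𝓕⁻ (φ : E → ℂ) ξ * f ξ := by
  have h := DFunLike.congr_fun (Lp.fourierInv_toTemperedDistribution_eq f) φ
  simpa [TemperedDistribution.fourierInv_apply, Lp.toTemperedDistribution_apply,
    ← SchwartzMap.fourierInv_coe] using h.symm

lemma coeFn_fourierInv_of_integrable (f : Lp ℂ 2 (volume : Measure E)) (hf : Integrable f) :
    ⇑(𝓕⁻ f : Lp ℂ 2 (volume : Measure E)) =ᵐ[volume] 𝓕⁻ (f : E → ℂ) := by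
  refine ae_eq_of_integral_contDiff_smul_eq ((Lp.memLp _).locallyIntegrable one_le_two)
    (continuous_fourierInv_of_integrable hf).locallyIntegrable fun ψ hψ hψc => ?_
  have hφc : HasCompactSupport fun x => (ψ x : ℂ) := hψc.comp_left Complex.ofReal_zero
  set φ : 𝓢(E, ℂ) := hφc.toSchwartzMap (Complex.ofRealCLM.contDiff.comp hψ)
  simp only [Complex.real_smul]
  exact (integral_mul_coeFn_fourierInv f φ).trans (integral_fourierInv_mul_eq φ.integrable hf)

end FourierMultipliers

section MulFourierInvMul

open scoped FourierTransform ENNReal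

variable {E : Type*} [NormedAddCommGroup E] [InnerProductSpace ℝ E] [FiniteDimensional ℝ E]
  [MeasurableSpace E] [BorelSpace E]

lemma memLp_conj_fourierChar_mul {b : E → ℂ} {p : ℝ≥0∞} (hb : MemLp b p) (x : E) :
    MemLp (fun ξ => starRingEnd ℂ (Real.fourierChar (inner ℝ ξ x) * b ξ)) p := by
  have hchar : Continuous fun ξ : E => (Real.fourierChar (inner ℝ ξ x) : ℂ) := by fun_prop
  refine hb.of_le (Complex.continuous_conj.comp_aestronglyMeasurable
    (hchar.aestronglyMeasurable.mul hb.1)) (.of_forall fun ξ => ?_)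
  rw [RCLike.norm_conj, norm_mul, Circle.norm_coe, one_mul]

/-- The square-integrable function `ξ ↦ conj (𝐞⟨ξ, x⟩ b(ξ))`, the inner product with which
evaluates `𝓕⁻ (b u)` at `x`. -/
def fourierInvKernel {b : E → ℂ} (hb : MemLp b 2) (x : E) : Lp ℂ 2 (volume : Measure E) :=
  (memLp_conj_fourierChar_mul hb x).toLp

lemma norm_sq_fourierInvKernel {b : E → ℂ} (hb : MemLp b 2) (x : E) :
    ‖fourierInvKernel hb x‖ ^ 2 = ∫ ξ, ‖b ξ‖ ^ 2 := by
  rw [norm_sq_eq_integral_norm_sq]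
  refine integral_congr_ae ?_
  filter_upwards [(memLp_conj_fourierChar_mul hb x).coeFn_toLp] with ξ hξ
  rw [fourierInvKernel, hξ, RCLike.norm_conj, norm_mul, Circle.norm_coe, one_mul]

lemma coeFn_fourierInv_mulCLM {b : E → ℂ} (hb : MemLp b ⊤) (hb₂ : MemLp b 2)
    (u : Lp ℂ 2 (volume : Measure E)) :
    ⇑(𝓕⁻ (mulCLM hb u) : Lp ℂ 2 (volume : Measure E))
      =ᵐ[volume] fun x => inner ℂ (fourierInvKernel hb₂ x) u := by
  have hint : Integrable (mulCLM hb u) :=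
    (hb₂.integrable_mul (Lp.memLp u)).congr (coeFn_mulCLM hb u).symm
  filter_upwards [coeFn_fourierInv_of_integrable _ hint] with x hx
  rw [hx, L2.inner_def, Real.fourierInv_eq]
  refine integral_congr_ae ?_
  filter_upwards [coeFn_mulCLM hb u, (memLp_conj_fourierChar_mul hb₂ x).coeFn_toLp]
    with ξ hbu hker
  rw [fourierInvKernel, hker, hbu, Circle.smul_def, RCLike.inner_apply', Complex.conj_conj,
    smul_eq_mul, mul_assoc]

lemma ae_sum_norm_sq_fourierInv_mulCLM_le {b : E → ℂ} (hb : MemLp b ⊤) (hb₂ : MemLp b 2)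
    {ι : Type*} [Fintype ι] {e : ι → Lp ℂ 2 (volume : Measure E)} (he : Orthonormal ℂ e) :
    ∀ᵐ x, ∑ j, ‖(𝓕⁻ (mulCLM hb (e j)) : Lp ℂ 2 (volume : Measure E)) x‖ ^ 2
      ≤ ∫ ξ, ‖b ξ‖ ^ 2 := by
  filter_upwards [ae_all_iff.2 fun j => coeFn_fourierInv_mulCLM hb hb₂ (e j)] with x hx
  simp only [hx, norm_inner_symm (fourierInvKernel hb₂ x), ← norm_sq_fourierInvKernel hb₂ x]
  exact he.sum_inner_products_le _

/-- The operator `a(x) b(D)`, precomposed with the inverse Fourier transform: it sends `u` to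
`a · 𝓕⁻ (b u)`. -/
def mulFourierInvMul {a b : E → ℂ} (ha : MemLp a ⊤) (hb : MemLp b ⊤) :
    Lp ℂ 2 (volume : Measure E) →L[ℂ] Lp ℂ 2 (volume : Measure E) :=
  mulCLM ha ∘L FourierTransform.fourierInvCLM ℂ (Lp ℂ 2 (volume : Measure E)) ∘L mulCLM hb

lemma norm_mulFourierInvMul_le {a b : E → ℂ} (ha : MemLp a ⊤) (hb : MemLp b ⊤) {C : ℝ}
    (hC₀ : 0 ≤ C) (hC : ∀ᵐ ξ, ‖b ξ‖ ≤ C) : ‖mulFourierInvMul ha hb‖ ≤ ‖mulCLM ha‖ * C := by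
  refine ContinuousLinearMap.opNorm_le_bound _ (by positivity) fun u => ?_
  calc ‖mulCLM ha (𝓕⁻ (mulCLM hb u))‖
      ≤ ‖mulCLM ha‖ * ‖(𝓕⁻ (mulCLM hb u) : Lp ℂ 2 (volume : Measure E))‖ :=
        (mulCLM ha).le_opNorm _
    _ = ‖mulCLM ha‖ * ‖mulCLM hb u‖ := by
        rw [← Lp.norm_fourier_eq (𝓕⁻ _), FourierTransform.fourier_fourierInv_eq]
    _ ≤ ‖mulCLM ha‖ * (C * ‖u‖) := by
        gcongr
        exact (mulCLM hb).le_of_opNorm_le (norm_mulCLM_le hb hC₀ hC) u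
    _ = ‖mulCLM ha‖ * C * ‖u‖ := by ring

lemma sum_norm_sq_mulFourierInvMul_le {a b : E → ℂ} (ha : MemLp a ⊤) (ha₂ : MemLp a 2)
    (hb : MemLp b ⊤) (hb₂ : MemLp b 2) {ι : Type*} [Fintype ι]
    {e : ι → Lp ℂ 2 (volume : Measure E)} (he : Orthonormal ℂ e) :
    ∑ j, ‖mulFourierInvMul ha hb (e j)‖ ^ 2 ≤ (∫ x, ‖a x‖ ^ 2) * ∫ ξ, ‖b ξ‖ ^ 2 := by
  simp_rw [norm_sq_eq_integral_norm_sq]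
  rw [← integral_finsetSum _ fun j _ => (Lp.memLp _).integrable_norm_pow two_ne_zero,
    ← integral_mul_const]
  refine integral_mono_ae
    (integrable_finsetSum _ fun j _ => (Lp.memLp _).integrable_norm_pow two_ne_zero)
    ((ha₂.integrable_norm_pow two_ne_zero).mul_const _) ?_
  filter_upwards [ae_sum_norm_sq_fourierInv_mulCLM_le hb hb₂ he,
    ae_all_iff.2 fun j => coeFn_mulCLM ha (𝓕⁻ (mulCLM hb (e j)))] with x hbessel hmul
  calc ∑ j, ‖mulFourierInvMul ha hb (e j) x‖ ^ 2
      = ∑ j, ‖a x‖ ^ 2 * ‖(𝓕⁻ (mulCLM hb (e j)) : Lp ℂ 2 (volume : Measure E)) x‖ ^ 2 :=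
        Finset.sum_congr rfl fun j _ => by rw [← mul_pow, ← norm_mul, ← hmul j]; rfl
    _ ≤ ‖a x‖ ^ 2 * ∫ ξ, ‖b ξ‖ ^ 2 := by rw [← Finset.mul_sum]; gcongr

lemma sNum_mulFourierInvMul_le {a b : E → ℂ} (ha : MemLp a ⊤) (ha₂ : MemLp a 2)
    (hb : MemLp b ⊤) (hb₂ : MemLp b 2) (k : ℕ) :
    sNum (mulFourierInvMul ha hb) k
      ≤ √((∫ x, ‖a x‖ ^ 2) * (∫ ξ, ‖b ξ‖ ^ 2) / ((k : ℝ) + 1)) :=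
  sNum_le_of_forall_orthonormal _ fun _ he => sum_norm_sq_mulFourierInvMul_le ha ha₂ hb hb₂ he

lemma sNum_mulFourierInvMul_add_le {a b c : E → ℂ} (ha : MemLp a ⊤) (ha₂ : MemLp a 2)
    (hb : MemLp b ⊤) (hb₂ : MemLp b 2) (hc : MemLp c ⊤) {C : ℝ} (hC₀ : 0 ≤ C)
    (hC : ∀ᵐ ξ, ‖c ξ‖ ≤ C) (k : ℕ) :
    sNum (mulFourierInvMul ha (hb.add hc)) k
      ≤ √((∫ x, ‖a x‖ ^ 2) * (∫ ξ, ‖b ξ‖ ^ 2) / ((k : ℝ) + 1)) + ‖mulCLM ha‖ * C := by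
  have hsplit : mulFourierInvMul ha (hb.add hc)
      = mulFourierInvMul ha hb + mulFourierInvMul ha hc := by
    rw [mulFourierInvMul, mulCLM_add hb hc, ContinuousLinearMap.comp_add,
      ContinuousLinearMap.comp_add]
    rfl
  rw [hsplit]
  exact (sNum_add_le _ _ k).trans
    (add_le_add (sNum_mulFourierInvMul_le ha ha₂ hb hb₂ k) (norm_mulFourierInvMul_le ha hc hC₀ hC))

end MulFourierInvMul

section BesselWeight

open scoped ENNReal

variable {E : Type*} [NormedAddCommGroup E]

/-- The symbol `(1 + ‖ξ‖²)^(-s/2)` of the Bessel potential of order `s`, as a complex-valued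
function. -/
def besselWeight (E : Type*) [NormedAddCommGroup E] (s : ℝ) (ξ : E) : ℂ :=
  ((1 + ‖ξ‖ ^ 2) ^ (-s / 2) : ℝ)

/-- The set of frequencies `ξ` with `1 + ‖ξ‖² ≤ R`. -/
def lowFrequencies (E : Type*) [NormedAddCommGroup E] (R : ℝ) : Set E := {ξ | 1 + ‖ξ‖ ^ 2 ≤ R}

lemma norm_besselWeight (s : ℝ) (ξ : E) : ‖besselWeight E s ξ‖ = (1 + ‖ξ‖ ^ 2) ^ (-s / 2) := by
  rw [besselWeight, Complex.norm_real, Real.norm_of_nonneg (by positivity)]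

lemma norm_sq_besselWeight (s : ℝ) (ξ : E) :
    ‖besselWeight E s ξ‖ ^ 2 = (1 + ‖ξ‖ ^ 2) ^ (-s) := by
  rw [norm_besselWeight, ← Real.rpow_natCast, ← Real.rpow_mul (by positivity)]
  norm_num

lemma besselWeight_ne_zero (s : ℝ) (ξ : E) : besselWeight E s ξ ≠ 0 := by
  rw [← norm_pos_iff, norm_besselWeight]
  positivity

lemma continuous_besselWeight (s : ℝ) : Continuous (besselWeight E s) := by
  refine Complex.continuous_ofReal.comp (Continuous.rpow_const (by fun_prop) fun ξ => .inl ?_)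
  positivity

lemma norm_indicator_compl_besselWeight_le {s R : ℝ} (hs : 0 ≤ s) (hR : 0 < R) (ξ : E) :
    ‖(lowFrequencies E R)ᶜ.indicator (besselWeight E s) ξ‖ ≤ R ^ (-s / 2) := by
  rw [norm_indicator_eq_indicator_norm]
  refine Set.indicator_apply_le' (fun hξ => ?_) fun _ => by positivity
  rw [norm_besselWeight]
  have hlt : R < 1 + ‖ξ‖ ^ 2 := lt_of_not_ge (show ¬ 1 + ‖ξ‖ ^ 2 ≤ R from hξ)
  exact Real.rpow_le_rpow_of_nonpos hR hlt.le (by linarith)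

lemma norm_sq_indicator_besselWeight_le {s m R : ℝ} (hsm : 2 * s ≤ m) (hR : 0 ≤ R) (ξ : E) :
    ‖(lowFrequencies E R).indicator (besselWeight E s) ξ‖ ^ 2
      ≤ R ^ ((m - 2 * s) / 2) * (1 + ‖ξ‖ ^ 2) ^ (-m / 2) := by
  by_cases hξ : ξ ∈ lowFrequencies E R
  · calc ‖(lowFrequencies E R).indicator (besselWeight E s) ξ‖ ^ 2
        = (1 + ‖ξ‖ ^ 2) ^ ((m - 2 * s) / 2) * (1 + ‖ξ‖ ^ 2) ^ (-m / 2) := by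
          rw [Set.indicator_of_mem hξ, norm_sq_besselWeight, ← Real.rpow_add (by positivity)]
          ring_nf
      _ ≤ R ^ ((m - 2 * s) / 2) * (1 + ‖ξ‖ ^ 2) ^ (-m / 2) := by
          have : 0 ≤ (m - 2 * s) / 2 := by linarith
          gcongr
          exact hξ
  · rw [Set.indicator_of_notMem hξ, norm_zero, zero_pow two_ne_zero]
    positivity

variable [MeasurableSpace E] [BorelSpace E]

lemma measurableSet_lowFrequencies (R : ℝ) : MeasurableSet (lowFrequencies E R) :=
  measurableSet_le (by fun_prop) measurable_const

variable [InnerProductSpace ℝ E] [FiniteDimensional ℝ E]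

lemma memLp_top_besselWeight {s : ℝ} (hs : 0 ≤ s) :
    MemLp (besselWeight E s) ⊤ (volume : Measure E) := by
  refine memLp_top_of_bound (continuous_besselWeight s).aestronglyMeasurable 1
    (.of_forall fun ξ => ?_)
  rw [norm_besselWeight]
  exact Real.rpow_le_one_of_one_le_of_nonpos (by nlinarith [sq_nonneg ‖ξ‖]) (by linarith)

lemma integrable_norm_sq_indicator_besselWeight {s m R : ℝ} (hm : (Module.finrank ℝ E : ℝ) < m)
    (hsm : 2 * s ≤ m) (hR : 0 ≤ R) :
    Integrable fun ξ => ‖(lowFrequencies E R).indicator (besselWeight E s) ξ‖ ^ 2 := by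
  refine ((integrable_rpow_neg_one_add_norm_sq hm).const_mul (R ^ ((m - 2 * s) / 2))).mono'
    (by exact (((continuous_besselWeight s).aestronglyMeasurable.indicator
      (measurableSet_lowFrequencies R)).norm.pow 2)) (.of_forall fun ξ => ?_)
  rw [norm_pow, norm_norm]
  exact norm_sq_indicator_besselWeight_le hsm hR ξ

lemma integral_norm_sq_indicator_besselWeight_le {s m R : ℝ}
    (hm : (Module.finrank ℝ E : ℝ) < m) (hsm : 2 * s ≤ m) (hR : 0 ≤ R) :
    ∫ ξ, ‖(lowFrequencies E R).indicator (besselWeight E s) ξ‖ ^ 2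
      ≤ R ^ ((m - 2 * s) / 2) * ∫ ξ : E, (1 + ‖ξ‖ ^ 2) ^ (-m / 2) := by
  rw [← integral_const_mul]
  exact integral_mono (integrable_norm_sq_indicator_besselWeight hm hsm hR)
    ((integrable_rpow_neg_one_add_norm_sq hm).const_mul _)
    fun ξ => norm_sq_indicator_besselWeight_le hsm hR ξ

lemma sNum_mulFourierInvMul_besselWeight_le_add {a : E → ℂ} (ha : MemLp a ⊤) (ha₂ : MemLp a 2)
    {s m R : ℝ} (hs : 0 ≤ s) (hm : (Module.finrank ℝ E : ℝ) < m) (hsm : 2 * s ≤ m) (hR : 0 < R)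
    (k : ℕ) :
    sNum (mulFourierInvMul ha (memLp_top_besselWeight hs)) k
      ≤ √((∫ x, ‖a x‖ ^ 2) * (R ^ ((m - 2 * s) / 2) * ∫ ξ : E, (1 + ‖ξ‖ ^ 2) ^ (-m / 2))
          / ((k : ℝ) + 1)) + ‖mulCLM ha‖ * R ^ (-s / 2) := by
  have hS := measurableSet_lowFrequencies (E := E) R
  have hw := memLp_top_besselWeight (E := E) hs
  have hlow₂ : MemLp ((lowFrequencies E R).indicator (besselWeight E s)) 2 :=
    (memLp_two_iff_integrable_sq_norm (hw.indicator hS).1).2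
      (integrable_norm_sq_indicator_besselWeight hm hsm hR.le)
  have hsplit := sNum_mulFourierInvMul_add_le ha ha₂ (hw.indicator hS) hlow₂
    (hw.indicator hS.compl) (by positivity)
    (.of_forall (norm_indicator_compl_besselWeight_le hs hR)) k
  simp only [Set.indicator_self_add_compl] at hsplit
  refine hsplit.trans ?_
  gcongr
  exact integral_norm_sq_indicator_besselWeight_le hm hsm hR.le

/-- The cutoff `R = (k + 1)^(2/m)` balances the two terms of
`sNum_mulFourierInvMul_besselWeight_le_add`. -/
lemma sNum_mulFourierInvMul_besselWeight_le {a : E → ℂ} (ha : MemLp a ⊤) (ha₂ : MemLp a 2)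
    {s m : ℝ} (hs : 0 ≤ s) (hm : (Module.finrank ℝ E : ℝ) < m) (hsm : 2 * s ≤ m) (k : ℕ) :
    sNum (mulFourierInvMul ha (memLp_top_besselWeight hs)) k
      ≤ (√((∫ x, ‖a x‖ ^ 2) * ∫ ξ : E, (1 + ‖ξ‖ ^ 2) ^ (-m / 2)) + ‖mulCLM ha‖)
        * ((k : ℝ) + 1) ^ (-(s / m)) := by
  have hm₀ : 0 < m := (Nat.cast_nonneg _).trans_lt hm
  set A := ∫ x, ‖a x‖ ^ 2
  set J := ∫ ξ : E, (1 + ‖ξ‖ ^ 2) ^ (-m / 2)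
  set N : ℝ := (k : ℝ) + 1
  have hN : 0 < N := by positivity
  have hhigh : (N ^ (2 / m)) ^ (-s / 2) = N ^ (-(s / m)) := by
    rw [← Real.rpow_mul hN.le]
    congr 1
    field_simp
  have hlow : (N ^ (2 / m)) ^ ((m - 2 * s) / 2) / N = (N ^ (-(s / m))) ^ 2 := by
    rw [← Real.rpow_mul hN.le, ← Real.rpow_natCast, ← Real.rpow_mul hN.le,
      ← Real.rpow_sub_one hN.ne']
    congr 1
    field_simp
    ring
  calc sNum (mulFourierInvMul ha (memLp_top_besselWeight hs)) k
      ≤ √(A * ((N ^ (2 / m)) ^ ((m - 2 * s) / 2) * J) / N)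
        + ‖mulCLM ha‖ * (N ^ (2 / m)) ^ (-s / 2) :=
        sNum_mulFourierInvMul_besselWeight_le_add ha ha₂ hs hm hsm (by positivity) k
    _ = √(A * J * (N ^ (-(s / m))) ^ 2) + ‖mulCLM ha‖ * N ^ (-(s / m)) := by
        rw [hhigh, ← hlow]
        ring_nf
    _ = (√(A * J) + ‖mulCLM ha‖) * N ^ (-(s / m)) := by
        rw [Real.sqrt_mul' _ (sq_nonneg _), Real.sqrt_sq (by positivity), add_mul]

lemma memWeakSchatten_mulFourierInvMul_besselWeight {a : E → ℂ} (ha : MemLp a ⊤)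
    (ha₂ : MemLp a 2) {s m : ℝ} (hs : 0 < s) (hm : (Module.finrank ℝ E : ℝ) < m)
    (hsm : 2 * s ≤ m) :
    MemWeakSchatten (m / s) (mulFourierInvMul ha (memLp_top_besselWeight hs.le)) := by
  have hm₀ : 0 < m := (Nat.cast_nonneg _).trans_lt hm
  refine memWeakSchatten_of_sNum_le (C := √((∫ x, ‖a x‖ ^ 2) *
    ∫ ξ : E, (1 + ‖ξ‖ ^ 2) ^ (-m / 2)) + ‖mulCLM ha‖) (by positivity) fun k => ?_
  rw [one_div_div]
  exact sNum_mulFourierInvMul_besselWeight_le ha ha₂ hs.le hm hsm k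

end BesselWeight

section RangeFactorization

variable {𝕜 X Y Z : Type*} [NontriviallyNormedField 𝕜]
  [NormedAddCommGroup X] [NormedSpace 𝕜 X] [CompleteSpace X]
  [NormedAddCommGroup Y] [NormedSpace 𝕜 Y]
  [NormedAddCommGroup Z] [NormedSpace 𝕜 Z] [CompleteSpace Z]

lemma exists_comp_eq_of_range_le {J : X →L[𝕜] Y} (hJ : Function.Injective J) (S : Z →L[𝕜] Y)
    (hS : S.range ≤ J.range) : ∃ B : Z →L[𝕜] X, J ∘L B = S := by
  let B : Z →ₗ[𝕜] X := (LinearEquiv.ofInjective J.toLinearMap hJ).symm.toLinearMap ∘ₗ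
    S.toLinearMap.codRestrict J.range fun z => hS ⟨z, rfl⟩
  have hB (z : Z) : J (B z) = S z :=
    congrArg Subtype.val ((LinearEquiv.ofInjective J.toLinearMap hJ).apply_symm_apply _)
  refine ⟨.ofSeqClosedGraph (g := B) fun u z x hz hx => hJ ?_, ContinuousLinearMap.ext hB⟩
  rw [hB]
  refine tendsto_nhds_unique ((J.continuous.tendsto x).comp hx) ?_
  simpa only [Function.comp_def, hB] using (S.continuous.tendsto z).comp hz

end RangeFactorization

section SobolevRange

open scoped FourierTransform SchwartzMap
open TemperedDistribution

variable {E : Type*} [NormedAddCommGroup E]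

lemma besselWeight_neg_mul (s : ℝ) : besselWeight E s * besselWeight E (-s) = 1 := by
  ext ξ
  simp only [besselWeight, Pi.mul_apply, Pi.one_apply, ← Complex.ofReal_mul]
  rw [← Real.rpow_add (by positivity)]
  simp [neg_div]

variable [InnerProductSpace ℝ E]

lemma hasTemperateGrowth_besselWeight (s : ℝ) : (besselWeight E s).HasTemperateGrowth := by
  unfold besselWeight
  fun_prop

variable [FiniteDimensional ℝ E] [MeasurableSpace E] [BorelSpace E]

lemma toTemperedDistribution_mulCLM {a : E → ℂ} (ha : MemLp a ⊤) (ha' : a.HasTemperateGrowth)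
    (f : Lp ℂ 2 (volume : Measure E)) :
    (mulCLM ha f : 𝓢'(E, ℂ)) = smulLeftCLM ℂ a (f : 𝓢'(E, ℂ)) :=
  Lp.toTemperedDistribution_smul_eq ha' ha f

lemma memSobolev_iff_exists_besselWeight {s : ℝ} {f : 𝓢'(E, ℂ)} :
    MemSobolev s 2 f ↔ ∃ g : Lp ℂ 2 (volume : Measure E),
      smulLeftCLM ℂ (besselWeight E (-s)) (𝓕 f) = g := by
  unfold besselWeight
  rw [neg_neg]
  exact memSobolev_iff_exists_smulLeftCLM_fourier

lemma exists_fourierInv_mulCLM_besselWeight_eq {s : ℝ} (hs : 0 ≤ s)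
    {f : Lp ℂ 2 (volume : Measure E)} (hf : MemSobolev s 2 (f : 𝓢'(E, ℂ))) :
    ∃ g, 𝓕⁻ (mulCLM (memLp_top_besselWeight hs) g) = f := by
  obtain ⟨g, hg⟩ := memSobolev_iff_exists_besselWeight.1 hf
  refine ⟨g, LinearMap.ker_eq_bot.1 Lp.ker_toTemperedDistributionCLM_eq_bot ?_⟩
  simp only [ContinuousLinearMap.coe_coe, Lp.toTemperedDistributionCLM_apply]
  rw [← Lp.fourierInv_toTemperedDistribution_eq,
    toTemperedDistribution_mulCLM _ (hasTemperateGrowth_besselWeight s), ← hg,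
    smulLeftCLM_smulLeftCLM_apply (hasTemperateGrowth_besselWeight (-s))
      (hasTemperateGrowth_besselWeight s), mul_comm, besselWeight_neg_mul]
  exact (congrArg _ (smulLeftCLM_const 1 _)).trans
    (by rw [one_smul, FourierTransform.fourierInv_fourier_eq])

lemma exists_comp_eq_of_forall_memSobolev {K : Type*} [NormedAddCommGroup K] [NormedSpace ℂ K]
    [CompleteSpace K] {s : ℝ} (hs : 0 ≤ s) (S : K →L[ℂ] Lp ℂ 2 (volume : Measure E))
    (hS : ∀ u, MemSobolev s 2 (S u : 𝓢'(E, ℂ))) :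
    ∃ B : K →L[ℂ] Lp ℂ 2 (volume : Measure E),
      FourierTransform.fourierInvCLM ℂ (Lp ℂ 2 (volume : Measure E)) ∘L
        mulCLM (memLp_top_besselWeight hs) ∘L B = S := by
  set J : Lp ℂ 2 (volume : Measure E) →L[ℂ] Lp ℂ 2 (volume : Measure E) :=
    FourierTransform.fourierInvCLM ℂ (Lp ℂ 2 (volume : Measure E)) ∘L
      mulCLM (memLp_top_besselWeight hs)
  have hJ : Function.Injective J :=
    (Function.LeftInverse.injective FourierTransform.fourier_fourierInv_eq).comp
      (mulCLM_injective _ (.of_forall (besselWeight_ne_zero s)))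
  refine exists_comp_eq_of_range_le hJ S ?_
  rintro _ ⟨u, rfl⟩
  exact exists_fourierInv_mulCLM_besselWeight_eq hs (hS u)

end SobolevRange

section DerivativesInSobolevSpaces

open scoped SchwartzMap LineDeriv Laplacian
open TemperedDistribution

variable {E F : Type*} [NormedAddCommGroup E] [InnerProductSpace ℝ E] [FiniteDimensional ℝ E]
  [MeasurableSpace E] [BorelSpace E] [NormedAddCommGroup F] [InnerProductSpace ℂ F]

lemma besselPotential_two (f : 𝓢'(E, F)) :
    besselPotential E F 2 f = f - ((2 * Real.pi) ^ 2 : ℂ)⁻¹ • Δ f := by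
  have hsymbol : (fun ξ : E => (((1 + ‖ξ‖ ^ 2) ^ ((2 : ℝ) / 2) : ℝ) : ℂ)) =
      (fun _ => 1) + fun ξ => ((‖ξ‖ ^ 2 : ℝ) : ℂ) := by
    ext ξ
    simp
  have hmultiplier : fourierMultiplierCLM F (fun ξ : E => ((‖ξ‖ ^ 2 : ℝ) : ℂ)) f =
      -((2 * Real.pi) ^ 2 : ℂ)⁻¹ • Δ f := by
    rw [laplacian_eq_fourierMultiplierCLM, ← Complex.coe_smul, smul_smul]
    push_cast
    rw [neg_mul_neg, inv_mul_cancel₀ (by simp [Real.pi_ne_zero]), one_smul]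
  rw [besselPotential, hsymbol, fourierMultiplierCLM_apply,
    smulLeftCLM_add (by fun_prop) (by fun_prop), add_apply, smulLeftCLM_const, one_smul,
    FourierTransform.fourierInv_add, FourierTransform.fourierInv_fourier_eq,
    ← fourierMultiplierCLM_apply, hmultiplier, neg_smul, sub_eq_add_neg]

variable [CompleteSpace F]

lemma memSobolev_sum {ι : Type*} (t : Finset ι) {s : ℝ} {f : ι → 𝓢'(E, F)}
    (hf : ∀ i ∈ t, MemSobolev s 2 (f i)) : MemSobolev s 2 (∑ i ∈ t, f i) :=
  Finset.sum_induction f (MemSobolev s 2) (fun _ _ => MemSobolev.add) (memSobolev_fun_zero E F s 2)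
    hf

lemma memSobolev_add_one {ι : Type*} [Fintype ι] (b : OrthonormalBasis ι ℝ E) {s : ℝ}
    {f : 𝓢'(E, F)} (hf : MemSobolev s 2 f) (hdf : ∀ i, MemSobolev s 2 (∂_{b i} f)) :
    MemSobolev (s + 1) 2 f := by
  have hlap : MemSobolev (s - 1) 2 (Δ f) := by
    rw [laplacian_eq_sum b]
    exact memSobolev_sum _ fun i _ => (hdf i).lineDerivOp
  have hbessel : MemSobolev (s - 1) 2 (besselPotential E F 2 f) := by
    rw [besselPotential_two]
    exact (hf.mono (by linarith)).sub (hlap.smul _)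
  convert memSobolev_besselPotential_iff.1 hbessel using 1
  ring

end DerivativesInSobolevSpaces

section WeakDerivatives

open scoped SchwartzMap LineDeriv ContDiff
open TemperedDistribution

lemma tendsto_integral_smul_of_norm_le {X F : Type*} [MeasurableSpace X] {μ : Measure X}
    [NormedAddCommGroup F] [NormedSpace ℝ F] {a : ℕ → X → ℝ} {b : X → ℝ} {C : ℝ} {f : X → F}
    (ha : ∀ k, AEStronglyMeasurable (a k) μ) (hC : ∀ k x, ‖a k x‖ ≤ C)
    (hab : ∀ x, Tendsto (a · x) atTop (𝓝 (b x))) (hf : Integrable f μ) :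
    Tendsto (fun k => ∫ x, a k x • f x ∂μ) atTop (𝓝 (∫ x, b x • f x ∂μ)) := by
  refine tendsto_integral_of_dominated_convergence (fun x => C * ‖f x‖)
    (fun k => (ha k).smul hf.1) (hf.norm.const_mul C) (fun k => .of_forall fun x => ?_)
    (.of_forall fun x => (hab x).smul_const (f x))
  rw [norm_smul]
  exact mul_le_mul_of_nonneg_right (hC k x) (norm_nonneg _)

variable {E F : Type*} [NormedAddCommGroup E] [InnerProductSpace ℝ E] [NormedAddCommGroup F]

lemma lineDerivOp_postcompCLM {G : Type*} [NormedSpace ℝ F] [NormedAddCommGroup G]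
    [NormedSpace ℝ G] (L : F →L[ℝ] G) (φ : 𝓢(E, F)) (v : E) :
    ∂_{v} (φ.postcompCLM L) = (∂_{v} φ).postcompCLM L := by
  ext x
  exact congrArg (· v) (L.hasFDerivAt.comp x φ.differentiableAt.hasFDerivAt).fderiv

lemma temperedDistribution_ext_ofReal [NormedSpace ℂ F] {u w : 𝓢'(E, F)}
    (h : ∀ φ : 𝓢(E, ℝ), u (φ.postcompCLM Complex.ofRealCLM) =
      w (φ.postcompCLM Complex.ofRealCLM)) :
    u = w := by
  ext φ
  have hφ : φ = (φ.postcompCLM Complex.reCLM).postcompCLM Complex.ofRealCLM +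
      Complex.I • (φ.postcompCLM Complex.imCLM).postcompCLM Complex.ofRealCLM := by
    ext x
    simp [mul_comm Complex.I, Complex.re_add_im]
  rw [hφ, map_add, map_add, map_smul, map_smul, h, h]

variable [FiniteDimensional ℝ E]

lemma exists_contDiff_hasCompactSupport_tendsto_one (v : E) : ∃ (χ : ℕ → E → ℝ) (C : ℝ),
    (∀ k, ContDiff ℝ ∞ (χ k)) ∧ (∀ k, HasCompactSupport (χ k)) ∧ (∀ k x, ‖χ k x‖ ≤ 1) ∧
      (∀ x, Tendsto (χ · x) atTop (𝓝 1)) ∧ (∀ k x, ‖fderiv ℝ (χ k) x v‖ ≤ C) ∧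
        ∀ x, Tendsto (fun k => fderiv ℝ (χ k) x v) atTop (𝓝 0) := by
  let χ : ContDiffBump (0 : E) := ⟨1, 2, one_pos, one_lt_two⟩
  let ε (k : ℕ) : ℝ := 1 / ((k : ℝ) + 1)
  have hε_pos (k : ℕ) : 0 < ε k := Nat.one_div_pos_of_nat
  have hε_le (k : ℕ) : ε k ≤ 1 := (div_le_one (by positivity)).2 (by simp)
  have hε : Tendsto ε atTop (𝓝 0) := tendsto_one_div_add_atTop_nhds_zero_nat
  obtain ⟨C, hC⟩ := (χ.hasCompactSupport.fderiv_apply ℝ v).exists_bound_of_continuous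
    ((χ.contDiff.continuous_fderiv one_ne_zero).clm_apply continuous_const)
  have hfderiv_le (k : ℕ) (x : E) : ‖fderiv ℝ (fun y => χ (ε k • y)) x v‖ ≤ ε k * C := by
    rw [fderiv_comp_smul, smul_apply, norm_smul, Real.norm_of_nonneg (hε_pos k).le]
    exact mul_le_mul_of_nonneg_left (hC _) (hε_pos k).le
  refine ⟨fun k x => χ (ε k • x), C, fun k => χ.contDiff.comp (contDiff_const_smul _),
    fun k => χ.hasCompactSupport.comp_smul (hε_pos k).ne', fun k x => ?_, fun x => ?_,
    fun k x => (hfderiv_le k x).trans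
      (mul_le_of_le_one_left ((norm_nonneg _).trans (hC 0)) (hε_le k)),
    fun x => squeeze_zero_norm (hfderiv_le · x)
      (by simpa only [zero_mul] using hε.mul_const C)⟩
  · rw [Real.norm_of_nonneg χ.nonneg]
    exact χ.le_one
  · have hχ := (χ.continuous.tendsto _).comp (hε.smul_const x)
    rwa [zero_smul, χ.one_of_mem_closedBall (Metric.mem_closedBall_self zero_le_one)] at hχ

variable [MeasurableSpace E] [BorelSpace E]

lemma integral_fderiv_smul_eq_neg_of_forall_hasCompactSupport [NormedSpace ℝ F] {v : E}
    {f g : E → F}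
    (h : ∀ φ : E → ℝ, ContDiff ℝ ∞ φ → HasCompactSupport φ →
      ∫ x, fderiv ℝ φ x v • f x = -∫ x, φ x • g x)
    {ψ : E → ℝ} (hψ : ContDiff ℝ ∞ ψ) (hψ'f : Integrable fun x => fderiv ℝ ψ x v • f x)
    (hψf : Integrable fun x => ψ x • f x) (hψg : Integrable fun x => ψ x • g x) :
    ∫ x, fderiv ℝ ψ x v • f x = -∫ x, ψ x • g x := by
  obtain ⟨χ, C, hχ, hχ_supp, hχ_le, hχ_one, hχ'_le, hχ'_zero⟩ :=
    exists_contDiff_hasCompactSupport_tendsto_one v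
  have hχ_meas (k : ℕ) : AEStronglyMeasurable (χ k) := (hχ k).continuous.aestronglyMeasurable
  have hχ'_meas (k : ℕ) : AEStronglyMeasurable fun x => fderiv ℝ (χ k) x v :=
    (((hχ k).continuous_fderiv (by simp)).clm_apply continuous_const).aestronglyMeasurable
  have hcutoff (k : ℕ) : (∫ x, χ k x • fderiv ℝ ψ x v • f x) +
      ∫ x, fderiv ℝ (χ k) x v • ψ x • f x = -∫ x, χ k x • ψ x • g x := by
    refine (integral_add (hψ'f.bdd_smul 1 (hχ_meas k) (.of_forall (hχ_le k)))
      (hψf.bdd_smul C (hχ'_meas k) (.of_forall (hχ'_le k)))).symm.trans ?_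
    convert! h (fun x => χ k x * ψ x) ((hχ k).mul hψ) (hχ_supp k).mul_right using 3 with x
    · rw [fderiv_fun_mul ((hχ k).differentiable (by simp) x) (hψ.differentiable (by simp) x)]
      simp [add_smul, smul_smul, mul_comm]
    · simp only [smul_smul]
  have hlimit_left := (tendsto_integral_smul_of_norm_le hχ_meas hχ_le hχ_one hψ'f).add
    (tendsto_integral_smul_of_norm_le hχ'_meas hχ'_le hχ'_zero hψf)
  have hlimit_right := (tendsto_integral_smul_of_norm_le hχ_meas hχ_le hχ_one hψg).neg
  simp only [hcutoff, one_smul, zero_smul, integral_zero, add_zero] at hlimit_left hlimit_right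
  exact tendsto_nhds_unique hlimit_left hlimit_right

lemma lineDerivOp_toTemperedDistribution_eq [NormedSpace ℂ F] [CompleteSpace F] {v : E}
    {f g : Lp F 2 (volume : Measure E)}
    (h : ∀ φ : E → ℝ, ContDiff ℝ ∞ φ → HasCompactSupport φ →
      ∫ x, fderiv ℝ φ x v • f x = -∫ x, φ x • g x) :
    ∂_{v} (f : 𝓢'(E, F)) = g := by
  refine temperedDistribution_ext_ofReal fun ψ => ?_
  have hint (φ : 𝓢(E, ℝ)) (a : Lp F 2 (volume : Measure E)) : Integrable fun x => φ x • a x :=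
    memLp_one_iff_integrable.1 ((Lp.memLp a).smul (𝕜 := ℝ) (φ.memLp 2))
  have hparts := integral_fderiv_smul_eq_neg_of_forall_hasCompactSupport h (ψ.smooth ⊤)
    (hint (∂_{v} ψ) f) (hint ψ f) (hint ψ g)
  have hpair (φ : 𝓢(E, ℝ)) (a : Lp F 2 (volume : Measure E)) :
      (a : 𝓢'(E, F)) (φ.postcompCLM Complex.ofRealCLM) = ∫ x, φ x • a x := by
    simp [Lp.toTemperedDistribution_apply]
  rw [lineDerivOp_apply_apply, lineDerivOp_postcompCLM, map_neg, hpair, hpair]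
  exact neg_eq_iff_eq_neg.2 hparts

end WeakDerivatives

section TranslationInFourierSpace

open scoped FourierTransform SchwartzMap ENNReal
open TemperedDistribution

lemma eLpNorm_two_sq_eq_lintegral_enorm_sq {X F : Type*} [MeasurableSpace X] {μ : Measure X}
    [NormedAddCommGroup F] (f : X → F) : eLpNorm f 2 μ ^ 2 = ∫⁻ x, ‖f x‖ₑ ^ 2 ∂μ := by
  simpa using eLpNorm_nnreal_pow_eq_lintegral (p := 2) (f := f) (μ := μ) two_ne_zero

variable {E : Type*} [NormedAddCommGroup E] [InnerProductSpace ℝ E]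

lemma coe_compSubConstCLM_neg (φ : 𝓢(E, ℂ)) (h : E) :
    ⇑(φ.compSubConstCLM ℂ (-h)) = φ ∘ (· + h) := by
  ext x
  simp

variable [FiniteDimensional ℝ E] [MeasurableSpace E] [BorelSpace E]

lemma memLp_top_fourierChar_inner (h : E) :
    MemLp (fun ξ : E => (Real.fourierChar (inner ℝ h ξ) : ℂ)) ⊤ :=
  memLp_top_of_bound (Continuous.aestronglyMeasurable (by fun_prop)) 1
    (.of_forall fun _ => (Circle.norm_coe _).le)

lemma compMeasurePreserving_add_right_toLp (φ : 𝓢(E, ℂ)) (h : E) :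
    Lp.compMeasurePreserving (· + h) (measurePreserving_add_right volume h) (φ.toLp 2) =
      (φ.compSubConstCLM ℂ (-h)).toLp 2 := by
  have hφ := (measurePreserving_add_right volume h).quasiMeasurePreserving.ae_eq_comp
    (φ.coeFn_toLp 2)
  rw [← coe_compSubConstCLM_neg] at hφ
  exact Lp.ext ((Lp.coeFn_compMeasurePreserving _ _).trans
    (hφ.trans (SchwartzMap.coeFn_toLp _ 2 volume).symm))

lemma fourier_compSubConstCLM_neg_apply (φ : 𝓢(E, ℂ)) (h ξ : E) :
    𝓕 (φ.compSubConstCLM ℂ (-h)) ξ = Real.fourierChar (inner ℝ h ξ) * 𝓕 φ ξ := by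
  rw [SchwartzMap.fourier_coe, coe_compSubConstCLM_neg]
  exact congrFun (VectorFourier.fourierIntegral_comp_add_right _ _ (innerₗ E) φ h) ξ

lemma fourier_compMeasurePreserving_add_right (f : Lp ℂ 2 (volume : Measure E)) (h : E) :
    𝓕 (Lp.compMeasurePreserving (· + h) (measurePreserving_add_right volume h) f) =
      mulCLM (memLp_top_fourierChar_inner h) (𝓕 f) := by
  refine DenseRange.induction_on (SchwartzMap.denseRange_toLpCLM (p := 2) ENNReal.ofNat_ne_top) f
    (isClosed_eq ?_ ?_) fun φ => ?_
  · exact (FourierTransform.fourierCLM ℂ (Lp ℂ 2 (volume : Measure E))).continuous.comp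
      (Lp.compMeasurePreservingₗᵢ ℂ _ (measurePreserving_add_right volume h)).continuous
  · exact (mulCLM _ ∘L FourierTransform.fourierCLM ℂ (Lp ℂ 2 (volume : Measure E))).continuous
  · rw [SchwartzMap.toLpCLM_apply, compMeasurePreserving_add_right_toLp,
      SchwartzMap.toLp_fourier_eq, SchwartzMap.toLp_fourier_eq]
    refine Lp.ext ?_
    filter_upwards [coeFn_mulCLM (memLp_top_fourierChar_inner h) ((𝓕 φ).toLp 2),
      (𝓕 φ).coeFn_toLp 2, (𝓕 (φ.compSubConstCLM ℂ (-h))).coeFn_toLp 2] with ξ hmul hφ hψ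
    rw [hmul, hφ, hψ, fourier_compSubConstCLM_neg_apply]

lemma lintegral_enorm_add_right_sub_sq (f : Lp ℂ 2 (volume : Measure E)) (h : E) :
    ∫⁻ x, ‖f (x + h) - f x‖ₑ ^ 2 =
      ∫⁻ ξ, ‖(Real.fourierChar (inner ℝ h ξ) : ℂ) - 1‖ₑ ^ 2 * ‖𝓕 f ξ‖ₑ ^ 2 := by
  set τf := Lp.compMeasurePreserving (· + h) (measurePreserving_add_right volume h) f
  have hphysical : ∫⁻ x, ‖f (x + h) - f x‖ₑ ^ 2 = ‖τf - f‖ₑ ^ 2 := by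
    rw [Lp.enorm_def, eLpNorm_two_sq_eq_lintegral_enorm_sq]
    refine lintegral_congr_ae ?_
    filter_upwards [Lp.coeFn_sub τf f,
      Lp.coeFn_compMeasurePreserving f (measurePreserving_add_right volume h)] with x hsub hτf
    rw [hsub, Pi.sub_apply, hτf, Function.comp_apply]
  have hfrequency : ∫⁻ ξ, ‖(Real.fourierChar (inner ℝ h ξ) : ℂ) - 1‖ₑ ^ 2 * ‖𝓕 f ξ‖ₑ ^ 2 =
      ‖𝓕 τf - 𝓕 f‖ₑ ^ 2 := by
    rw [Lp.enorm_def, eLpNorm_two_sq_eq_lintegral_enorm_sq, fourier_compMeasurePreserving_add_right]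
    refine lintegral_congr_ae ?_
    filter_upwards [Lp.coeFn_sub (mulCLM (memLp_top_fourierChar_inner h) (𝓕 f)) (𝓕 f),
      coeFn_mulCLM (memLp_top_fourierChar_inner h) (𝓕 f)] with ξ hsub hmul
    rw [hsub, Pi.sub_apply, hmul, ← sub_one_mul, enorm_mul, mul_pow]
  have hsub : 𝓕 τf - 𝓕 f = 𝓕 (τf - f) := ((Lp.fourierTransformₗᵢ E ℂ).map_sub τf f).symm
  rw [hphysical, hfrequency, hsub, ← ofReal_norm, ← ofReal_norm, Lp.norm_fourier_eq]

lemma lintegral_prod_enorm_sub_sq_mul (f : Lp ℂ 2 (volume : Measure E)) {ρ : E → ℝ≥0∞}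
    (hρ : Measurable ρ) :
    ∫⁻ z, ‖f z.1 - f z.2‖ₑ ^ 2 * ρ (z.1 - z.2) ∂(volume.prod volume : Measure (E × E)) =
      ∫⁻ ξ, (∫⁻ h, ‖(Real.fourierChar (inner ℝ h ξ) : ℂ) - 1‖ₑ ^ 2 * ρ h) * ‖𝓕 f ξ‖ₑ ^ 2 := by
  have := (Lp.stronglyMeasurable f).measurable
  have := (Lp.stronglyMeasurable (𝓕 f)).measurable
  have : Measurable fun z : E × E => (Real.fourierChar (inner ℝ z.1 z.2) : ℂ) :=
    Continuous.measurable (by fun_prop)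
  calc
    _ = ∫⁻ y, ∫⁻ x, ‖f x - f y‖ₑ ^ 2 * ρ (x - y) := lintegral_prod_symm' _ (by fun_prop)
    _ = ∫⁻ y, ∫⁻ h, ‖f (h + y) - f y‖ₑ ^ 2 * ρ h := by
      refine lintegral_congr fun y => ?_
      rw [← lintegral_add_right_eq_self _ y]
      simp only [add_sub_cancel_right]
    _ = ∫⁻ h, ∫⁻ y, ‖f (y + h) - f y‖ₑ ^ 2 * ρ h := by
      rw [lintegral_lintegral_swap (Measurable.aemeasurable (by fun_prop))]
      simp only [add_comm]
    _ = ∫⁻ h, ∫⁻ ξ, ‖(Real.fourierChar (inner ℝ h ξ) : ℂ) - 1‖ₑ ^ 2 * ρ h * ‖𝓕 f ξ‖ₑ ^ 2 := by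
      refine lintegral_congr fun h => ?_
      rw [lintegral_mul_const _ (by fun_prop), lintegral_enorm_add_right_sub_sq,
        ← lintegral_mul_const _ (by fun_prop)]
      simp only [mul_right_comm]
    _ = _ := by
      rw [lintegral_lintegral_swap (Measurable.aemeasurable (by fun_prop))]
      exact lintegral_congr fun ξ => lintegral_mul_const _ (by fun_prop)

end TranslationInFourierSpace

section GagliardoSeminorm

open scoped FourierTransform SchwartzMap ENNReal
open TemperedDistribution

variable {E : Type*} [NormedAddCommGroup E]

lemma norm_besselWeight_neg_le {s : ℝ} (hs : 0 ≤ s) (ξ : E) :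
    ‖besselWeight E (-s) ξ‖ ≤ 2 ^ (s / 2) * (1 + ‖ξ‖ ^ s) := by
  rw [norm_besselWeight, neg_neg]
  have hmax : max 1 ‖ξ‖ ^ s ≤ 1 + ‖ξ‖ ^ s := by
    rcases max_cases 1 ‖ξ‖ with ⟨h, -⟩ | ⟨h, -⟩ <;> rw [h]
    · rw [Real.one_rpow]
      exact le_add_of_nonneg_right (by positivity)
    · exact le_add_of_nonneg_left zero_le_one
  calc
    (1 + ‖ξ‖ ^ 2) ^ (s / 2) ≤ (2 * max 1 ‖ξ‖ ^ 2) ^ (s / 2) := by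
      gcongr
      nlinarith [le_max_left 1 ‖ξ‖, le_max_right 1 ‖ξ‖, norm_nonneg ξ]
    _ = 2 ^ (s / 2) * max 1 ‖ξ‖ ^ s := by
      rw [Real.mul_rpow (by positivity) (by positivity), ← Real.rpow_natCast_mul (by positivity)]
      congr 2
      push_cast
      ring
    _ ≤ _ := by gcongr

variable [InnerProductSpace ℝ E]

lemma one_le_norm_fourierChar_sub_one {t : ℝ} (ht : |t - 1 / 2| ≤ 1 / 4) :
    1 ≤ ‖(Real.fourierChar t : ℂ) - 1‖ := by
  have hre : ((Real.fourierChar t : ℂ) - 1).re = Real.cos (2 * Real.pi * t) - 1 := by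
    rw [Real.fourierChar_apply, Complex.sub_re, Complex.exp_ofReal_mul_I_re, Complex.one_re]
  have hcos : Real.cos (2 * Real.pi * t) ≤ 0 := by
    rw [abs_le] at ht
    apply Real.cos_nonpos_of_pi_div_two_le_of_le <;> nlinarith [Real.pi_pos]
  calc
    1 ≤ -((Real.fourierChar t : ℂ) - 1).re := by linarith
    _ ≤ |((Real.fourierChar t : ℂ) - 1).re| := neg_le_abs _
    _ ≤ _ := Complex.abs_re_le_norm _

lemma abs_inner_sub_half_le_of_mem_ball {ξ h : E} (hξ : ξ ≠ 0)
    (hh : h ∈ Metric.ball ((2 * ‖ξ‖ ^ 2)⁻¹ • ξ) (4 * ‖ξ‖)⁻¹) : |inner ℝ h ξ - 1 / 2| ≤ 1 / 4 := by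
  have := norm_pos_iff.2 hξ
  have hcenter : inner ℝ ((2 * ‖ξ‖ ^ 2)⁻¹ • ξ) ξ = 1 / 2 := by
    rw [real_inner_smul_left, real_inner_self_eq_norm_sq]
    field_simp
  calc
    |inner ℝ h ξ - 1 / 2| = |inner ℝ (h - (2 * ‖ξ‖ ^ 2)⁻¹ • ξ) ξ| := by
      rw [inner_sub_left, hcenter]
    _ ≤ ‖h - (2 * ‖ξ‖ ^ 2)⁻¹ • ξ‖ * ‖ξ‖ := abs_real_inner_le_norm _ _
    _ ≤ (4 * ‖ξ‖)⁻¹ * ‖ξ‖ := by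
      gcongr
      exact (mem_ball_iff_norm.1 hh).le
    _ = 1 / 4 := by field_simp

lemma norm_le_inv_norm_of_mem_ball {ξ h : E}
    (hh : h ∈ Metric.ball ((2 * ‖ξ‖ ^ 2)⁻¹ • ξ) (4 * ‖ξ‖)⁻¹) : ‖h‖ ≤ ‖ξ‖⁻¹ := by
  have hξ : ‖ξ‖ ≠ 0 := by
    intro h0
    simp [h0] at hh
  calc
    ‖h‖ ≤ ‖h - (2 * ‖ξ‖ ^ 2)⁻¹ • ξ‖ + ‖(2 * ‖ξ‖ ^ 2)⁻¹ • ξ‖ := norm_le_norm_sub_add _ _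
    _ ≤ (4 * ‖ξ‖)⁻¹ + (2 * ‖ξ‖)⁻¹ := by
      rw [norm_smul, Real.norm_of_nonneg (by positivity : 0 ≤ (2 * ‖ξ‖ ^ 2)⁻¹)]
      gcongr
      · exact (mem_ball_iff_norm.1 hh).le
      · exact le_of_eq (by field_simp)
    _ ≤ ‖ξ‖⁻¹ := by
      field_simp
      norm_num

variable [FiniteDimensional ℝ E] [MeasurableSpace E] [BorelSpace E]

lemma rpow_norm_le_lintegral_fourierChar {s : ℝ} (hs : 0 < s) (ξ : E) :
    ENNReal.ofReal (‖ξ‖ ^ (2 * s)) *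
        (ENNReal.ofReal (4⁻¹ ^ Module.finrank ℝ E) * volume (Metric.ball (0 : E) 1)) ≤
      ∫⁻ h, ‖(Real.fourierChar (inner ℝ h ξ) : ℂ) - 1‖ₑ ^ 2 *
        ENNReal.ofReal (‖h‖ ^ (Module.finrank ℝ E + 2 * s))⁻¹ := by
  rcases eq_or_ne ξ 0 with rfl | hξ
  · simp [hs.ne']
  have hξ' := norm_pos_iff.2 hξ
  -- On this ball the phase `⟨h, ξ⟩` stays within `1 / 4` of `1 / 2`, so `‖𝐞⟨h, ξ⟩ - 1‖ ≥ 1`.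
  set B := Metric.ball ((2 * ‖ξ‖ ^ 2)⁻¹ • ξ) (4 * ‖ξ‖)⁻¹
  have hB : ∀ h ∈ B, ENNReal.ofReal (‖ξ‖ ^ (Module.finrank ℝ E + 2 * s)) ≤
      ‖(Real.fourierChar (inner ℝ h ξ) : ℂ) - 1‖ₑ ^ 2 *
        ENNReal.ofReal (‖h‖ ^ (Module.finrank ℝ E + 2 * s))⁻¹ := by
    intro h hh
    have hinner := abs_inner_sub_half_le_of_mem_ball hξ hh
    have hchar : 1 ≤ ‖(Real.fourierChar (inner ℝ h ξ) : ℂ) - 1‖ₑ := by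
      rw [← enorm_one (G := ℂ)]
      exact enorm_le_iff_norm_le.2 (by simpa using one_le_norm_fourierChar_sub_one hinner)
    have hh0 : 0 < ‖h‖ := by
      refine norm_pos_iff.2 fun h0 => ?_
      norm_num [h0] at hinner
    refine le_mul_of_one_le_of_le (one_le_pow₀ hchar) (ENNReal.ofReal_le_ofReal ?_)
    rw [← Real.inv_rpow hh0.le]
    gcongr
    exact (le_inv_comm₀ hh0 hξ').1 (norm_le_inv_norm_of_mem_ball hh)
  have hvolume : volume B =
      ENNReal.ofReal ((4 * ‖ξ‖)⁻¹ ^ Module.finrank ℝ E) * volume (Metric.ball (0 : E) 1) :=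
    Measure.addHaar_ball_of_pos _ _ (by positivity)
  calc
    _ = ∫⁻ _ in B, ENNReal.ofReal (‖ξ‖ ^ (Module.finrank ℝ E + 2 * s)) := by
      rw [setLIntegral_const, hvolume, ← mul_assoc, ← mul_assoc,
        ← ENNReal.ofReal_mul (by positivity), ← ENNReal.ofReal_mul (by positivity),
        Real.rpow_add hξ', Real.rpow_natCast, mul_inv, mul_pow, inv_pow ‖ξ‖]
      congr 2
      field_simp
    _ ≤ ∫⁻ h in B, _ := setLIntegral_mono' measurableSet_ball hB
    _ ≤ _ := setLIntegral_le_lintegral _ _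

lemma memLp_rpow_norm_mul_fourier {s : ℝ} (hs : 0 < s) {f : Lp ℂ 2 (volume : Measure E)}
    (hf : ∫⁻ z, ‖f z.1 - f z.2‖ₑ ^ 2 *
      ENNReal.ofReal (‖z.1 - z.2‖ ^ (Module.finrank ℝ E + 2 * s))⁻¹
        ∂(volume.prod volume : Measure (E × E)) < ⊤) :
    MemLp (fun ξ => (‖ξ‖ ^ s : ℝ) * 𝓕 f ξ) 2 := by
  rw [lintegral_prod_enorm_sub_sq_mul f
    (ρ := fun h => ENNReal.ofReal (‖h‖ ^ (Module.finrank ℝ E + 2 * s))⁻¹) (by fun_prop)] at hf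
  set c := ENNReal.ofReal (4⁻¹ ^ Module.finrank ℝ E) * volume (Metric.ball (0 : E) 1)
  have hc : c ≠ 0 := mul_ne_zero (by simp) (Metric.measure_ball_pos _ _ one_pos).ne'
  have hsq (ξ : E) : ‖((‖ξ‖ ^ s : ℝ) : ℂ) * 𝓕 f ξ‖ₑ ^ 2 =
      ENNReal.ofReal (‖ξ‖ ^ (2 * s)) * ‖𝓕 f ξ‖ₑ ^ 2 := by
    rw [enorm_mul, mul_pow, ← ofReal_norm, Complex.norm_real,
      Real.norm_of_nonneg (by positivity), ← ENNReal.ofReal_pow (by positivity),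
      ← Real.rpow_mul_natCast (norm_nonneg ξ), mul_comm s]
    norm_cast
  have hlintegral : ∫⁻ ξ, ‖((‖ξ‖ ^ s : ℝ) : ℂ) * 𝓕 f ξ‖ₑ ^ 2 < ⊤ := by
    refine ENNReal.lt_top_of_mul_ne_top_right (a := c) (lt_of_le_of_lt ?_ hf).ne hc
    rw [← lintegral_const_mul' _ _ (by finiteness)]
    refine lintegral_mono fun ξ => ?_
    rw [hsq, ← mul_assoc, mul_comm c]
    gcongr
    exact rpow_norm_le_lintegral_fourierChar hs ξ
  refine ⟨Measurable.aestronglyMeasurable (by fun_prop) |>.mul (Lp.aestronglyMeasurable _), ?_⟩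
  rwa [← eLpNorm_two_sq_eq_lintegral_enorm_sq, ENNReal.pow_lt_top_iff,
    or_iff_left two_ne_zero] at hlintegral

lemma memSobolev_of_memLp_rpow_norm_mul_fourier {s : ℝ} (hs : 0 ≤ s)
    {f : Lp ℂ 2 (volume : Measure E)} (hf : MemLp (fun ξ => (‖ξ‖ ^ s : ℝ) * 𝓕 f ξ) 2) :
    MemSobolev s 2 (f : 𝓢'(E, ℂ)) := by
  have hw : MemLp (fun ξ => besselWeight E (-s) ξ * 𝓕 f ξ) 2 := by
    refine ((Lp.memLp (𝓕 f)).norm.add hf.norm).of_le_mul (c := 2 ^ (s / 2))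
      ((continuous_besselWeight (-s)).aestronglyMeasurable.mul (Lp.aestronglyMeasurable _))
      (.of_forall fun ξ => ?_)
    calc
      ‖besselWeight E (-s) ξ * 𝓕 f ξ‖ ≤ 2 ^ (s / 2) * (1 + ‖ξ‖ ^ s) * ‖𝓕 f ξ‖ := by
        rw [norm_mul]
        gcongr
        exact norm_besselWeight_neg_le hs ξ
      _ = 2 ^ (s / 2) * (‖𝓕 f ξ‖ + ‖((‖ξ‖ ^ s : ℝ) : ℂ) * 𝓕 f ξ‖) := by
        rw [norm_mul, Complex.norm_real, Real.norm_of_nonneg (by positivity : 0 ≤ ‖ξ‖ ^ s)]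
        ring
      _ ≤ _ := by
        gcongr
        exact Real.le_norm_self _
  refine memSobolev_iff_exists_besselWeight.2 ⟨hw.toLp, ?_⟩
  rw [Lp.fourier_toTemperedDistribution_eq]
  ext φ
  rw [smulLeftCLM_apply_apply, Lp.toTemperedDistribution_apply, Lp.toTemperedDistribution_apply]
  refine integral_congr_ae ?_
  filter_upwards [hw.coeFn_toLp] with ξ hξ
  rw [hξ, SchwartzMap.smulLeftCLM_apply_apply (hasTemperateGrowth_besselWeight (-s))]
  rw [smul_eq_mul, smul_eq_mul, smul_eq_mul]
  ring

lemma memSobolev_of_integrable_gagliardo {s : ℝ} (hs : 0 < s) {f : E → ℂ} (hf : MemLp f 2)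
    (hgag : Integrable (fun z : E × E =>
      ‖f z.1 - f z.2‖ ^ 2 / ‖z.1 - z.2‖ ^ (Module.finrank ℝ E + 2 * s)) (volume.prod volume)) :
    MemSobolev s 2 (hf.toLp : 𝓢'(E, ℂ)) := by
  refine memSobolev_of_memLp_rpow_norm_mul_fourier hs.le (memLp_rpow_norm_mul_fourier hs ?_)
  refine lt_of_eq_of_lt (lintegral_congr_ae ?_) hgag.2
  filter_upwards [Measure.quasiMeasurePreserving_fst.ae_eq_comp hf.coeFn_toLp,
    Measure.quasiMeasurePreserving_snd.ae_eq_comp hf.coeFn_toLp] with z hfst hsnd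
  simp only [Function.comp_apply] at hfst hsnd
  rw [hfst, hsnd, ← ofReal_norm, ← ENNReal.ofReal_pow (norm_nonneg _),
    ← ENNReal.ofReal_mul (by positivity), ← div_eq_mul_inv, ← ofReal_norm,
    Real.norm_of_nonneg (by positivity)]

end GagliardoSeminorm

section WeakSobolevSpaces

open scoped SchwartzMap LineDeriv
open TemperedDistribution

variable {n : ℕ}

lemma IsWeakDerivB.lineDerivOp_toLp_eq {v : Bdy n} {f g : Bdy n → ℂ} (h : IsWeakDerivB n v f g)
    (hf : MemLp f 2) (hg : MemLp g 2) :
    ∂_{v} (hf.toLp : 𝓢'(Bdy n, ℂ)) = (hg.toLp : 𝓢'(Bdy n, ℂ)) := by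
  refine lineDerivOp_toTemperedDistribution_eq fun φ hφ hφ' => ?_
  calc
    ∫ x, fderiv ℝ φ x v • hf.toLp f x = ∫ x, f x * (fderiv ℝ φ x v : ℂ) := by
      refine integral_congr_ae ?_
      filter_upwards [hf.coeFn_toLp] with x hx
      rw [hx, Complex.real_smul, mul_comm]
    _ = -∫ x, g x * (φ x : ℂ) := h φ ⟨hφ, hφ'⟩
    _ = -∫ x, φ x • hg.toLp g x := by
      refine congrArg _ (integral_congr_ae ?_)
      filter_upwards [hg.coeFn_toLp] with x hx
      rw [hx, Complex.real_smul, mul_comm]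

lemma GagB.memSobolev_toLp {g : Bdy n → ℂ} (hgag : GagB n g) (hg : MemLp g 2) :
    MemSobolev (1 / 2) 2 (hg.toLp : 𝓢'(Bdy n, ℂ)) := by
  refine memSobolev_of_integrable_gagliardo one_half_pos hg ?_
  rw [finrank_euclideanSpace_fin, mul_one_div_cancel two_ne_zero]
  exact hgag

lemma MemH32B.memSobolev_toLp {f : Bdy n → ℂ} (hf : MemH32B n f) :
    MemSobolev (3 / 2) 2 (hf.1.toLp : 𝓢'(Bdy n, ℂ)) := by
  set b := EuclideanSpace.basisFun (Fin n) ℝ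
  have hderiv (i : Fin n) : MemSobolev (1 / 2) 2 (∂_{b i} (hf.1.toLp : 𝓢'(Bdy n, ℂ))) := by
    obtain ⟨g, hfg, hg, hgag⟩ := hf.2 i
    rw [EuclideanSpace.basisFun_apply, ← bdirs, hfg.lineDerivOp_toLp_eq hf.1 hg]
    exact hgag.memSobolev_toLp hg
  have hL2 : MemSobolev 0 2 (hf.1.toLp : 𝓢'(Bdy n, ℂ)) := memSobolev_zero_iff.2 ⟨_, rfl⟩
  have hH1 := memSobolev_add_one b hL2 fun i => (hderiv i).mono one_half_pos.le
  rw [show (3 / 2 : ℝ) = 1 / 2 + 1 by norm_num]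
  exact memSobolev_add_one b (hH1.mono (by norm_num)) hderiv

lemma MemH32B.memSobolev_of_ae_eq {f : Bdy n → ℂ} (hf : MemH32B n f) {u : Hbd n}
    (hu : u =ᵐ[volume] f) : MemSobolev (3 / 2) 2 (u : 𝓢'(Bdy n, ℂ)) := by
  rw [show u = hf.1.toLp from Lp.ext (hu.trans hf.1.coeFn_toLp.symm)]
  exact hf.memSobolev_toLp

end WeakSobolevSpaces

section SchattenMembership

open scoped SchwartzMap
open TemperedDistribution

theorem statement6_general {E : Type*} [NormedAddCommGroup E] [InnerProductSpace ℝ E]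
    [FiniteDimensional ℝ E] [MeasurableSpace E] [BorelSpace E] {K : Type*}
    [NormedAddCommGroup K] [InnerProductSpace ℂ K] [CompleteSpace K] {s : ℝ} (hs : 0 < s)
    (K₀ : K →L[ℂ] Lp ℂ 2 (volume : Measure E)) (hK₀ : ∀ u, MemSobolev s 2 (K₀ u : 𝓢'(E, ℂ)))
    {α : E → ℂ} (hα : MemLp α ⊤) (hα₂ : MemLp α 2) (T : K →L[ℂ] Lp ℂ 2 (volume : Measure E))
    (hT : ∀ u, ⇑(T u) =ᵐ[volume] fun x => α x * K₀ u x) {r : ℝ} (hr₂ : 2 < r)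
    (hr : Module.finrank ℝ E / s < r) : MemSchatten r T := by
  obtain ⟨m, hm, hmr⟩ : ∃ m, max (Module.finrank ℝ E : ℝ) (2 * s) < m ∧ m < r * s :=
    exists_between (max_lt ((div_lt_iff₀ hs).1 hr) (by gcongr))
  obtain ⟨hdm, hsm⟩ := max_lt_iff.1 hm
  obtain ⟨B, hB⟩ := exists_comp_eq_of_forall_memSobolev hs.le K₀ hK₀
  have hTB : T = mulFourierInvMul hα (memLp_top_besselWeight hs.le) ∘L B := by
    ext1 u
    refine Lp.ext ((hT u).trans ?_)
    rw [← hB]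
    exact (coeFn_mulCLM hα _).symm
  rw [hTB]
  exact ((memWeakSchatten_mulFourierInvMul_besselWeight hα hα₂ hs hdm hsm.le).comp B).memSchatten
    (div_pos ((Nat.cast_nonneg _).trans_lt hdm) hs) ((div_lt_iff₀ hs).2 hmr)

end SchattenMembership

theorem statement6 (n : ℕ) (hn : 3 ≤ n) (K : Type) [NormedAddCommGroup K]
    [InnerProductSpace ℂ K] [CompleteSpace K] (K₀ : K →L[ℂ] Hbd n)
    (hran : ∀ u : K, ∃ f : Bdy n → ℂ, ⇑(K₀ u) =ᵐ[(volume : Measure (Bdy n))] f ∧ MemH32B n f)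
    (α : Bdy n → ℂ) (hα : MemLp α ⊤ (volume : Measure (Bdy n)))
    (hα2 : MemLp α 2 (volume : Measure (Bdy n)))
    (T : K →L[ℂ] Hbd n)
    (hT : ∀ u : K, ⇑(T u) =ᵐ[(volume : Measure (Bdy n))] fun y => α y * (K₀ u) y) :
    ∀ r : ℝ, 2 * (n : ℝ) / 3 < r → MemSchatten r T := by
  intro r hr
  have hn' : (3 : ℝ) ≤ n := by exact_mod_cast hn
  refine statement6_general (s := 3 / 2) (by norm_num) K₀ (fun u => ?_) hα hα2 T hT (by linarith)
    (by rw [finrank_euclideanSpace_fin]; linarith)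
  obtain ⟨f, hf, hf'⟩ := hran u
  exact hf'.memSobolev_of_ae_eq hf

end RobinHS
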